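/- arXiv:2304.02315 — 11 statements merged into one kernel-verified Lean document; each statement's English description precedes it below -/
import Mathlib

section
/- Let n be a positive integer, let A and Z be real symmetric n×n matrices with A positive semidefinite, let A⁺ be the Moore–Penrose pseudoinverse of A, and let ε be a real number with 0 ≤ ε ≤ 1/2. If (1−ε)·A⁺ ⪯ Z ⪯ (1+ε)·A⁺, then for every vector b ∈ ℝⁿ, setting x = A⁺b and y = Zb, one has ‖x − y‖_A ≤ ε·‖x‖_A. -/
open Matrix

/-!
With `D = P - Z`, the hypotheses say `-ε P ⪯ D ⪯ ε P`. For a symmetric form `D`, a domination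
`|D(v, v)| ≤ Q(v, v)` on the diagonal yields the mixed Cauchy–Schwarz inequality
`D(u, v)² ≤ Q(u, u) Q(v, v)`. Apply it with `Q = ε P`, `v = b`, `u = A w`, where `w = D b = x - y`:
since `A` and `P` are symmetric, the relations `A P A = A` and `P A P = P` turn the two sides into
`‖w‖_A⁴` and `ε ‖w‖_A² · ε ‖x‖_A²`. The symmetry of `P` comes from `A`, which commutes with its
Moore–Penrose inverse because both products are the orthogonal projection onto the range of `A`.
-/

section MoorePenrose

variable {R : Type*} [Semigroup R] [StarMul R] {a p : R}

theorem commute_of_isSelfAdjoint_of_mul_mul_self (ha : IsSelfAdjoint a) (hapa : a * p * a = a)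
    (hap : IsSelfAdjoint (a * p)) (hpa : IsSelfAdjoint (p * a)) : Commute a p := by
  have h_left : p * a * a = a := by
    simpa only [mul_assoc a p a, star_mul a, ha.star_eq, hpa.star_eq] using congrArg star hapa
  have h_right : a * (a * p) = a := by
    simpa only [star_mul _ a, ha.star_eq, hap.star_eq] using congrArg star hapa
  calc a * p = p * a * a * p := by rw [h_left]
    _ = p * (a * (a * p)) := by simp only [mul_assoc]
    _ = p * a := by rw [h_right]

theorem isSelfAdjoint_moorePenrose_inverse (ha : IsSelfAdjoint a) (hapa : a * p * a = a)
    (hpap : p * a * p = p) (hap : IsSelfAdjoint (a * p)) (hpa : IsSelfAdjoint (p * a)) :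
    IsSelfAdjoint p := by
  have hcomm : a * p = p * a := commute_of_isSelfAdjoint_of_mul_mul_self ha hapa hap hpa
  have h_left : star p * a = a * p := by simpa only [star_mul, ha.star_eq] using hap.star_eq
  have h_right : a * star p = p * a := by simpa only [star_mul, ha.star_eq] using hpa.star_eq
  calc star p = star p * a * star p := by
        simpa only [star_mul, ha.star_eq, mul_assoc] using (congrArg star hpap).symm
    _ = p * (a * star p) := by rw [h_left, hcomm, mul_assoc]
    _ = p * (a * p) := by rw [h_right, hcomm]
    _ = p * a * p := (mul_assoc _ _ _).symm
    _ = p := hpap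

end MoorePenrose

section DominatedForm

variable {K M : Type*} [AddCommGroup M]

theorem two_mul_apply_le_of_abs_apply_self_le [CommRing K] [LinearOrder K] [IsStrictOrderedRing K]
    [Module K M] {D Q : LinearMap.BilinForm K M} (hD : D.IsSymm) (hDQ : ∀ v, |D v v| ≤ Q v v)
    (u v : M) : 2 * D u v ≤ Q u u + Q v v := by
  have hadd : D (u + v) (u + v) ≤ Q (u + v) (u + v) := (abs_le.mp (hDQ _)).2
  have hsub : -Q (u - v) (u - v) ≤ D (u - v) (u - v) := (abs_le.mp (hDQ _)).1
  simp only [map_add, map_sub, LinearMap.add_apply, LinearMap.sub_apply, hD.eq v u] at hadd hsub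
  linarith

theorem sq_apply_le_of_abs_apply_self_le [Field K] [LinearOrder K] [IsStrictOrderedRing K]
    [Module K M] {D Q : LinearMap.BilinForm K M} (hD : D.IsSymm) (hDQ : ∀ v, |D v v| ≤ Q v v)
    (u v : M) : D u v ^ 2 ≤ Q u u * Q v v := by
  have hquad (t : K) : 0 ≤ Q u u * (t * t) + (-2 * D u v) * t + Q v v := by
    have h := two_mul_apply_le_of_abs_apply_self_le hD hDQ (t • u) v
    simp only [map_smul, LinearMap.smul_apply, smul_eq_mul] at h
    linarith
  have hdiscrim := discrim_le_zero hquad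
  rw [discrim] at hdiscrim
  linarith

end DominatedForm

section Matrix

theorem isSelfAdjoint_iff_isSymm {n α : Type*} [Star α] [TrivialStar α] {A : Matrix n n α} :
    IsSelfAdjoint A ↔ A.IsSymm :=
  isHermitian_iff_isSelfAdjoint.symm.trans isHermitian_iff_isSymm

variable {n : Type*} [Fintype n]

theorem mulVec_dotProduct_mulVec_mulVec_of_mul_mul_self {α : Type*} [CommSemiring α]
    {B C : Matrix n n α} (hB : B.IsSymm) (hBCB : B * C * B = B) (x : n → α) :
    (B *ᵥ x) ⬝ᵥ (C *ᵥ (B *ᵥ x)) = x ⬝ᵥ (B *ᵥ x) := by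
  calc (B *ᵥ x) ⬝ᵥ (C *ᵥ (B *ᵥ x)) = x ⬝ᵥ (Bᵀ *ᵥ (C *ᵥ (B *ᵥ x))) := by
        rw [dotProduct_transpose_mulVec, dotProduct_comm]
    _ = x ⬝ᵥ (B *ᵥ x) := by rw [hB.eq, mulVec_mulVec, mulVec_mulVec, hBCB]

theorem sq_dotProduct_mulVec_le_of_posSemidef {D Q : Matrix n n ℝ}
    (hsub : (Q - D).PosSemidef) (hadd : (Q + D).PosSemidef) (u v : n → ℝ) :
    (u ⬝ᵥ (D *ᵥ v)) ^ 2 ≤ (u ⬝ᵥ (Q *ᵥ u)) * (v ⬝ᵥ (Q *ᵥ v)) := by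
  classical
  have hD : D.IsSymm := by
    have h : ((2 : ℝ) • D).IsSymm := by
      convert isHermitian_iff_isSymm.mp (hadd.isHermitian.sub hsub.isHermitian) using 1
      module
    exact (isSymm_smul_iff (2 : ℝ)).mp h
  have hDQ (v : n → ℝ) : |D.toBilin' v v| ≤ Q.toBilin' v v := by
    have hle := hsub.dotProduct_mulVec_nonneg v
    have hge := hadd.dotProduct_mulVec_nonneg v
    simp only [star_trivial, sub_mulVec, add_mulVec, dotProduct_sub, dotProduct_add] at hle hge
    simp only [toBilin'_apply']
    exact abs_le.mpr ⟨by linarith, by linarith⟩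
  simpa only [toBilin'_apply'] using
    sq_apply_le_of_abs_apply_self_le (isSymm_toBilin'_iff_isSymm.mpr hD) hDQ u v

/-- The `A`-seminorm `‖x‖_A = √(xᵀ A x)`, meaningful for positive semidefinite `A`; for other `A`
the square root of a negative number is `0`. -/
noncomputable def energyNorm (A : Matrix n n ℝ) (x : n → ℝ) : ℝ :=
  √(x ⬝ᵥ (A *ᵥ x))

theorem energyNorm_nonneg (A : Matrix n n ℝ) (x : n → ℝ) : 0 ≤ energyNorm A x :=
  Real.sqrt_nonneg _

theorem sq_energyNorm {A : Matrix n n ℝ} (hA : A.PosSemidef) (x : n → ℝ) :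
    energyNorm A x ^ 2 = x ⬝ᵥ (A *ᵥ x) :=
  Real.sq_sqrt (by simpa only [star_trivial] using hA.dotProduct_mulVec_nonneg x)

theorem approx_pseudoinverse_solve_general {A Z P : Matrix n n ℝ} (hA : A.PosSemidef)
    (hP : P.IsSymm) (hAPA : A * P * A = A) (hPAP : P * A * P = P) {ε : ℝ} (hε : 0 ≤ ε)
    (hlow : (Z - (1 - ε) • P).PosSemidef) (hup : ((1 + ε) • P - Z).PosSemidef) (b : n → ℝ) :
    energyNorm A (P *ᵥ b - Z *ᵥ b) ≤ ε * energyNorm A (P *ᵥ b) := by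
  rw [← sub_mulVec]
  set w := (P - Z) *ᵥ b with hw
  have hAw : (A *ᵥ w) ⬝ᵥ (P *ᵥ (A *ᵥ w)) = energyNorm A w ^ 2 := by
    rw [mulVec_dotProduct_mulVec_mulVec_of_mul_mul_self (isHermitian_iff_isSymm.mp hA.isHermitian)
      hAPA, sq_energyNorm hA]
  have hb : b ⬝ᵥ (P *ᵥ b) = energyNorm A (P *ᵥ b) ^ 2 := by
    rw [sq_energyNorm hA, mulVec_dotProduct_mulVec_mulVec_of_mul_mul_self hP hPAP]
  have hsub : (ε • P - (P - Z)).PosSemidef := by convert hlow using 1; module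
  have hadd : (ε • P + (P - Z)).PosSemidef := by convert hup using 1; module
  have hsq : (energyNorm A w ^ 2) ^ 2 ≤ (energyNorm A w * (ε * energyNorm A (P *ᵥ b))) ^ 2 := by
    have h := sq_dotProduct_mulVec_le_of_posSemidef hsub hadd (A *ᵥ w) b
    rw [← hw, dotProduct_comm, ← sq_energyNorm hA] at h
    simp only [smul_mulVec, dotProduct_smul, smul_eq_mul, hAw, hb] at h
    linarith
  have hx : 0 ≤ ε * energyNorm A (P *ᵥ b) := mul_nonneg hε (energyNorm_nonneg _ _)
  have hle : energyNorm A w * energyNorm A w ≤ energyNorm A w * (ε * energyNorm A (P *ᵥ b)) := by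
    rw [← sq]
    exact le_of_sq_le_sq hsq (mul_nonneg (energyNorm_nonneg _ _) hx)
  rcases (energyNorm_nonneg A w).eq_or_lt with hzero | hpos
  · rwa [← hzero]
  · exact le_of_mul_le_mul_left hle hpos

end Matrix

/-- If `(1-ε)·A⁺ ⪯ Z ⪯ (1+ε)·A⁺` for a symmetric PSD matrix `A` with
Moore–Penrose pseudoinverse `A⁺ = P`, and `0 ≤ ε ≤ 1/2`, then for every `b`,
with `x = A⁺ b` and `y = Z b`, we have `‖x - y‖_A ≤ ε ‖x‖_A`. -/
theorem approx_pseudoinverse_solve (n : ℕ) (hn : 0 < n)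
    (A Z P : Matrix (Fin n) (Fin n) ℝ)
    (hA : A.IsSymm) (hZ : Z.IsSymm)
    (hApsd : A.PosSemidef)
    (hP1 : A * P * A = A) (hP2 : P * A * P = P)
    (hP3 : (A * P).IsSymm) (hP4 : (P * A).IsSymm)
    (ε : ℝ) (hε0 : 0 ≤ ε) (hε1 : ε ≤ 1 / 2)
    (hlow : (Z - (1 - ε) • P).PosSemidef)
    (hup : ((1 + ε) • P - Z).PosSemidef) :
    ∀ b : Fin n → ℝ,
      Real.sqrt ((P *ᵥ b - Z *ᵥ b) ⬝ᵥ (A *ᵥ (P *ᵥ b - Z *ᵥ b)))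
        ≤ ε * Real.sqrt ((P *ᵥ b) ⬝ᵥ (A *ᵥ (P *ᵥ b))) := by
  have hP : P.IsSymm := isSelfAdjoint_iff_isSymm.mp <|
    isSelfAdjoint_moorePenrose_inverse (isSelfAdjoint_iff_isSymm.mpr hA) hP1 hP2
      (isSelfAdjoint_iff_isSymm.mpr hP3) (isSelfAdjoint_iff_isSymm.mpr hP4)
  exact approx_pseudoinverse_solve_general hApsd hP hP1 hP2 hε0 hlow hup
end

section
/- Let n be a positive integer, let A and Z be real symmetric n×n matrices with A positive semidefinite, let A⁺ be the Moore–Penrose pseudoinverse of A, and let ε be a real number with 0 ≤ ε ≤ 1/2. If (1−ε)·A⁺ ⪯ Z ⪯ (1+ε)·A⁺, then the matrix 2·A·Z·A − A·Z·A·Z·A − (1−ε²)·A·A⁺·A is positive semidefinite. -/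
open Matrix

/-!
Write `α = 1 + ε`, `β = 1 - ε`, `f = αA⁺ - Z` and `g = Z - βA⁺`. Because `AA⁺A = A`, the
factorization `(α + β)t - t² - αβ = (α - t)(t - β)` lifts to matrices: the matrix in question is
`AfAgA`. Moreover `AfA + AgA = cA` with `c = α - β`, so exchanging `f` and `g` does not change
`AfAgA`, and the commutative identity `(x + y)xy = yxy + xyx` becomes
`c AfAgA = (AgA)f(AgA) + (AfA)g(AfA)`, a sum of congruences of positive elements. If `c = 0`, the
positive elements `AfA` and `AgA` add up to zero, so both vanish and `AfAgA = 0`.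
-/

section Algebra

variable {k R : Type*} [CommRing k] [NonUnitalRing R] [Module k R] [IsScalarTower k R R]
  [SMulCommClass k R R]

theorem mul_mul_mul_mul_swap_of_add_eq_smul {a f g : R} {c : k}
    (h : a * f * a + a * g * a = c • a) : a * f * a * g * a = a * g * a * f * a := by
  have hf : a * f * a = c • a - a * g * a := eq_sub_of_add_eq h
  calc a * f * a * g * a
      = (c • a - a * g * a) * g * a := by rw [hf]
    _ = a * g * (c • a - a * g * a) := by
        simp only [sub_mul, mul_sub, smul_mul_assoc, mul_smul_comm, mul_assoc]
    _ = a * g * a * f * a := by rw [← hf]; simp only [mul_assoc]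

theorem conjugate_add_conjugate_eq_smul {a f g : R} {c : k}
    (h : a * f * a + a * g * a = c • a) :
    a * g * a * f * (a * g * a) + a * f * a * g * (a * f * a) = c • (a * f * a * g * a) :=
  calc a * g * a * f * (a * g * a) + a * f * a * g * (a * f * a)
      = a * g * a * f * a * g * a + a * f * a * g * (a * f * a) := by simp only [mul_assoc]
    _ = a * f * a * g * a * g * a + a * f * a * g * (a * f * a) := by
        rw [mul_mul_mul_mul_swap_of_add_eq_smul h]
    _ = a * f * a * g * (a * f * a + a * g * a) := by
        rw [mul_add, add_comm]
        simp only [mul_assoc]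
    _ = c • (a * f * a * g * a) := by rw [h, mul_smul_comm]

theorem conjugate_smul_sub_add_conjugate_sub_smul {a p : R} (hp : a * p * a = a) (z : R)
    (α β : k) : a * (α • p - z) * a + a * (z - β • p) * a = (α - β) • a := by
  simp only [mul_sub, sub_mul, mul_smul_comm, smul_mul_assoc, hp]
  module

theorem mul_smul_sub_mul_sub_smul_mul {a p : R} (hp : a * p * a = a) (z : R) (α β : k) :
    a * (α • p - z) * a * (z - β • p) * a =
      (α + β) • (a * z * a) - a * z * a * z * a - (α * β) • (a * p * a) := by
  have hzp : a * z * a * p * a = a * z * a := by rw [mul_assoc, mul_assoc, ← mul_assoc a p, hp]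
  simp only [mul_sub, sub_mul, mul_smul_comm, smul_mul_assoc, hp, hzp]
  module

end Algebra

section Order

variable {k R : Type*} [CommRing k] [PartialOrder k] [NonUnitalRing R] [StarRing R]
  [PartialOrder R] [StarOrderedRing R] [Module k R] [IsScalarTower k R R] [SMulCommClass k R R]
  [PosSMulReflectLE k R]

theorem mul_mul_mul_mul_nonneg_of_add_eq_smul {a f g : R} {c : k} (ha : IsSelfAdjoint a)
    (hf : 0 ≤ f) (hg : 0 ≤ g) (hc : 0 ≤ c) (h : a * f * a + a * g * a = c • a) :
    0 ≤ a * f * a * g * a := by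
  have hafa : 0 ≤ a * f * a := ha.conjugate_nonneg hf
  have haga : 0 ≤ a * g * a := ha.conjugate_nonneg hg
  rcases hc.eq_or_lt with rfl | hc_pos
  · rw [zero_smul, add_eq_zero_iff_of_nonneg hafa haga] at h
    simp [h.1]
  · refine nonneg_of_smul_nonneg_of_pos_left ?_ hc_pos
    rw [← conjugate_add_conjugate_eq_smul h]
    exact add_nonneg (conjugate_nonneg_of_nonneg hf haga) (conjugate_nonneg_of_nonneg hg hafa)

theorem psd_combination_general [IsOrderedAddMonoid k] {a p z : R} {α β : k}
    (ha : IsSelfAdjoint a) (hp : a * p * a = a) (hβα : β ≤ α) (hlow : β • p ≤ z)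
    (hup : z ≤ α • p) :
    (α * β) • (a * p * a) ≤ (α + β) • (a * z * a) - a * z * a * z * a := by
  rw [← sub_nonneg, ← mul_smul_sub_mul_sub_smul_mul hp]
  exact mul_mul_mul_mul_nonneg_of_add_eq_smul ha (sub_nonneg.mpr hup) (sub_nonneg.mpr hlow)
    (sub_nonneg.mpr hβα) (conjugate_smul_sub_add_conjugate_sub_smul hp z α β)

end Order

/-- If `(1-ε)·A⁺ ⪯ Z ⪯ (1+ε)·A⁺` for a symmetric PSD matrix `A` with
Moore–Penrose pseudoinverse `A⁺ = P`, and `0 ≤ ε ≤ 1/2`, then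
`2·A·Z·A − A·Z·A·Z·A − (1−ε²)·A·A⁺·A` is positive semidefinite. -/
theorem psd_combination (n : ℕ) (hn : 0 < n)
    (A Z P : Matrix (Fin n) (Fin n) ℝ)
    (hA : A.IsSymm) (hZ : Z.IsSymm)
    (hApsd : A.PosSemidef)
    (hP1 : A * P * A = A) (hP2 : P * A * P = P)
    (hP3 : (A * P).IsSymm) (hP4 : (P * A).IsSymm)
    (ε : ℝ) (hε0 : 0 ≤ ε) (hε1 : ε ≤ 1 / 2)
    (hlow : (Z - (1 - ε) • P).PosSemidef)
    (hup : ((1 + ε) • P - Z).PosSemidef) :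
    ((2 : ℝ) • (A * Z * A) - A * Z * A * Z * A
      - (1 - ε ^ 2) • (A * P * A)).PosSemidef := by
  open scoped MatrixOrder in
  have h := Matrix.le_iff.mp <| psd_combination_general hApsd.isHermitian hP1
    (by linarith : 1 - ε ≤ 1 + ε) (Matrix.le_iff.mpr hlow) (Matrix.le_iff.mpr hup)
  rwa [show 1 + ε + (1 - ε) = 2 by ring, show (1 + ε) * (1 - ε) = 1 - ε ^ 2 by ring] at h
end

section
/- Let n be a positive integer, let A and Z be real symmetric n×n matrices with A positive semidefinite, let A⁺ be the Moore–Penrose pseudoinverse of A, and let ε be a real number with 0 ≤ ε ≤ 1/2. If (1−ε)·A⁺ ⪯ Z ⪯ (1+ε)·A⁺, then Z·A·Z − Z·A·A⁺ − A⁺·A·Z + A⁺ ⪯ ε²·A⁺. -/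
open Matrix

/-!
Put `U = Z - (1 - ε) • P` and `V = (1 + ε) • P - Z`, so that `U + V = (2 * ε) • P`. Both are
positive semidefinite, so their kernels contain that of `U + V`; hence `P * A * P = P` gives
`U * A * P = U = P * A * U`, and likewise for `V`. It follows that the matrix to be shown positive
semidefinite is `U * A * V`, which up to a factor `2 * ε` is the parallel sum of `U` and `V`.
Parallel sums of positive semidefinite matrices are positive semidefinite, because
`U * A * V = V * A * U` and therefore
`(2 * ε) • (U * A * V) = (U * A) * V * (U * A)ᴴ + (V * A) * U * (V * A)ᴴ`.
-/

section PosSemidef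

open scoped ComplexOrder MatrixOrder

variable {ι κ 𝕜 : Type*} [Fintype ι] [RCLike 𝕜] {U V : Matrix ι ι 𝕜}

lemma conjTranspose_mul_mul_same_eq_zero_iff {M : Matrix ι κ 𝕜} (hU : U.PosSemidef) :
    Mᴴ * U * M = 0 ↔ U * M = 0 := by
  classical
  obtain ⟨B, rfl⟩ := CStarAlgebra.nonneg_iff_eq_star_mul_self.mp hU.nonneg
  rw [star_eq_conjTranspose, ← Matrix.mul_assoc, ← conjTranspose_mul, Matrix.mul_assoc,
    conjTranspose_mul_self_eq_zero, conjTranspose_mul_self_mul_eq_zero]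

lemma mul_eq_zero_of_add_mul_eq_zero [Finite κ] {M : Matrix ι κ 𝕜} (hU : U.PosSemidef)
    (hV : V.PosSemidef) (h : (U + V) * M = 0) : U * M = 0 := by
  have hsum : Mᴴ * U * M + Mᴴ * V * M = 0 := by
    rw [← Matrix.add_mul, ← Matrix.mul_add, Matrix.mul_assoc, h, Matrix.mul_zero]
  have hMUM : Mᴴ * U * M = 0 :=
    ((add_eq_zero_iff_of_nonneg (hU.conjTranspose_mul_mul_same M).nonneg
      (hV.conjTranspose_mul_mul_same M).nonneg).1 hsum).1
  exact (conjTranspose_mul_mul_same_eq_zero_iff hU).1 hMUM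

end PosSemidef

section ParallelSum

open scoped ComplexOrder

variable {ι 𝕜 : Type*} [Fintype ι] [RCLike 𝕜] {A P U V : Matrix ι ι 𝕜} {c : ℝ}

lemma mul_mul_eq_left_of_add_eq_smul (hP : P * A * P = P) (hU : U.PosSemidef)
    (hV : V.PosSemidef) (hUV : U + V = c • P) : U * A * P = U := by
  classical
  have hker : (U + V) * (1 - A * P) = 0 := by
    rw [hUV, smul_mul_assoc, mul_sub, mul_one, ← mul_assoc, hP, sub_self, smul_zero]
  have hUker : U * (1 - A * P) = 0 := mul_eq_zero_of_add_mul_eq_zero hU hV hker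
  rw [mul_sub, mul_one, ← mul_assoc, sub_eq_zero] at hUker
  exact hUker.symm

lemma mul_mul_eq_right_of_add_eq_smul (hP : P * A * P = P) (hU : U.PosSemidef)
    (hV : V.PosSemidef) (hUV : U + V = c • P) : P * A * U = U := by
  have hP' : Pᴴ * Aᴴ * Pᴴ = Pᴴ := by
    simpa only [conjTranspose_mul, ← mul_assoc] using congrArg conjTranspose hP
  have hUV' : U + V = c • Pᴴ := by
    simpa [hU.isHermitian.eq, hV.isHermitian.eq] using congrArg conjTranspose hUV
  have h : U * Aᴴ * Pᴴ = U := mul_mul_eq_left_of_add_eq_smul hP' hU hV hUV'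
  simpa [hU.isHermitian.eq, ← mul_assoc] using congrArg conjTranspose h

lemma mul_mul_comm_of_add_eq_smul (hP : P * A * P = P) (hU : U.PosSemidef)
    (hV : V.PosSemidef) (hUV : U + V = c • P) : U * A * V = V * A * U := by
  have h : U * A * (U + V) = (U + V) * A * U := by
    rw [hUV, mul_smul_comm, smul_mul_assoc, smul_mul_assoc,
      mul_mul_eq_left_of_add_eq_smul hP hU hV hUV, mul_mul_eq_right_of_add_eq_smul hP hU hV hUV]
  simpa only [mul_add, add_mul, add_right_inj] using h

lemma smul_mul_mul_eq_of_add_eq_smul (hP : P * A * P = P) (hU : U.PosSemidef)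
    (hV : V.PosSemidef) (hUV : U + V = c • P) :
    c • (U * A * V) = U * A * V * (U * A)ᴴ + V * A * U * (V * A)ᴴ := by
  have hVA : V * Aᴴ * (U + V) = c • V := by
    have h : (U + V) * A * V = c • V := by
      rw [hUV, smul_mul_assoc, smul_mul_assoc,
        mul_mul_eq_right_of_add_eq_smul hP hV hU (add_comm U V ▸ hUV)]
    simpa [hU.isHermitian.eq, hV.isHermitian.eq, ← mul_assoc] using congrArg conjTranspose h
  calc c • (U * A * V) = U * A * (V * Aᴴ * (U + V)) := by rw [hVA, mul_smul_comm]
    _ = U * A * V * (Aᴴ * U) + U * A * V * (Aᴴ * V) := by simp only [mul_add, mul_assoc]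
    _ = U * A * V * (U * A)ᴴ + V * A * U * (V * A)ᴴ := by
      rw [conjTranspose_mul, conjTranspose_mul, hU.isHermitian.eq, hV.isHermitian.eq,
        ← mul_mul_comm_of_add_eq_smul hP hU hV hUV]

theorem posSemidef_mul_mul_of_add_eq_smul (hP : P * A * P = P) (hU : U.PosSemidef)
    (hV : V.PosSemidef) (hc : 0 ≤ c) (hUV : U + V = c • P) : (U * A * V).PosSemidef := by
  classical
  obtain rfl | hc := hc.eq_or_lt
  · have hker : (U + V) * 1 = 0 := by rw [hUV, zero_smul, zero_mul]
    have hU0 : U = 0 := mul_one U ▸ mul_eq_zero_of_add_mul_eq_zero hU hV hker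
    simpa [hU0] using PosSemidef.zero
  · have hpsd : (c • (U * A * V)).PosSemidef := by
      rw [smul_mul_mul_eq_of_add_eq_smul hP hU hV hUV]
      exact (hV.mul_mul_conjTranspose_same (U * A)).add (hU.mul_mul_conjTranspose_same (V * A))
    simpa [smul_smul, hc.ne'] using hpsd.smul (inv_nonneg.2 hc.le)

end ParallelSum

lemma sq_smul_sub_error_eq_mul_mul {K R : Type*} [CommRing K] [NonUnitalRing R] [Module K R]
    [IsScalarTower K R R] [SMulCommClass K R R] {A Z P : R} (hP : P * A * P = P)
    (hZP : Z * A * P = Z) (hPZ : P * A * Z = Z) (ε : K) :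
    ε ^ 2 • P - (Z * A * Z - Z * A * P - P * A * Z + P) =
      (Z - (1 - ε) • P) * A * ((1 + ε) • P - Z) := by
  simp only [sub_mul, mul_sub, smul_mul_assoc, mul_smul_comm, hP, hZP, hPZ]
  module

open scoped ComplexOrder in
theorem error_operator_bound_general {ι 𝕜 : Type*} [Fintype ι] [RCLike 𝕜]
    {A Z P : Matrix ι ι 𝕜} (hP : P * A * P = P) {ε : ℝ} (hε : 0 ≤ ε)
    (hlow : (Z - (1 - ε) • P).PosSemidef) (hup : ((1 + ε) • P - Z).PosSemidef) :
    (ε ^ 2 • P - (Z * A * Z - Z * A * P - P * A * Z + P)).PosSemidef := by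
  have hsum : (Z - (1 - ε) • P) + ((1 + ε) • P - Z) = (2 * ε) • P := by module
  have hZP : Z * A * P = Z := by
    have h := mul_mul_eq_left_of_add_eq_smul hP hlow hup hsum
    simpa only [sub_mul, smul_mul_assoc, hP, sub_left_inj] using h
  have hPZ : P * A * Z = Z := by
    have h := mul_mul_eq_right_of_add_eq_smul hP hlow hup hsum
    simpa only [mul_sub, mul_smul_comm, hP, sub_left_inj] using h
  rw [sq_smul_sub_error_eq_mul_mul hP hZP hPZ]
  exact posSemidef_mul_mul_of_add_eq_smul hP hlow hup (by positivity) hsum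

/-- If `(1-ε)·A⁺ ⪯ Z ⪯ (1+ε)·A⁺` for a symmetric PSD matrix `A` with
Moore–Penrose pseudoinverse `A⁺ = P`, and `0 ≤ ε ≤ 1/2`, then
`Z·A·Z − Z·A·A⁺ − A⁺·A·Z + A⁺ ⪯ ε²·A⁺`. -/
theorem error_operator_bound (n : ℕ) (hn : 0 < n)
    (A Z P : Matrix (Fin n) (Fin n) ℝ)
    (hA : A.IsSymm) (hZ : Z.IsSymm)
    (hApsd : A.PosSemidef)
    (hP1 : A * P * A = A) (hP2 : P * A * P = P)
    (hP3 : (A * P).IsSymm) (hP4 : (P * A).IsSymm)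
    (ε : ℝ) (hε0 : 0 ≤ ε) (hε1 : ε ≤ 1 / 2)
    (hlow : (Z - (1 - ε) • P).PosSemidef)
    (hup : ((1 + ε) • P - Z).PosSemidef) :
    ((ε ^ 2) • P - (Z * A * Z - Z * A * P - P * A * Z + P)).PosSemidef :=
  error_operator_bound_general hP2 hε0 hlow hup
end

section
/- Let G be a finite simple graph on vertex set V in which every vertex has even degree. Then there exists a relation D : V → V → Prop such that: for all u, v, G.Adj u v holds if and only if exactly one of D u v and D v u holds; and for every vertex v, the number of vertices u with D v u equals the number of vertices u with D u v. In other words, G admits an orientation in which every vertex has out-degree equal to its in-degree (a Eulerian orientation). -/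
/-!
A graph all of whose degrees are even carries two fixed-point-free involutions of its darts: the
reversal `τ`, and an involution `σ` that pairs up the darts leaving each vertex. If a set `S` of
darts is exchanged with its complement by both of them, then `S` is a Eulerian orientation:
exchange under `τ` says that each edge gets exactly one direction, and `σ` matches the darts at `v`
that lie in `S` with those that do not, which are the reversals of the edges oriented into `v`.

Such an `S` exists for any two fixed-point-free involutions of a type. Conjugation by `τ` inverts
`π = σ * τ`, so `τ` acts on the orbits of `π`, and so does `σ`, in the same way. No orbit is mapped
to itself: `π ^ k a = τ a` would give a fixed point of `τ` if `k` is even, and of `σ` if `k` is odd.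
Hence one can choose one orbit out of each pair exchanged by `τ`.
-/

open Function Cardinal

namespace EulerianOrientation

section Involutions

variable {α : Type*}

lemma exists_involutive_ne_of_even_mk (h : Even #α) :
    ∃ f : α → α, Involutive f ∧ ∀ a, f a ≠ a := by
  obtain ⟨c, hc⟩ := h
  obtain ⟨e⟩ : Nonempty (α ≃ c.out ⊕ c.out) := Cardinal.eq.1 (by simpa using hc)
  refine ⟨fun a => e.symm (e a).swap, fun a => by simp, fun a ha => ?_⟩
  have hswap : (e a).swap = e a := e.symm_apply_eq.1 ha
  cases hea : e a <;> simp [hea] at hswap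

lemma exists_preimage_eq_compl {f : α → α} (hf : Involutive f) (hne : ∀ a, f a ≠ a) :
    ∃ S : Set α, f ⁻¹' S = Sᶜ := by
  obtain ⟨_, -⟩ := exists_wellFoundedLT α
  refine ⟨{a | a < f a}, Set.ext fun a => ?_⟩
  simp only [Set.mem_preimage, Set.mem_compl_iff, Set.mem_ofPred_eq, hf a, not_lt]
  exact (hne a).le_iff_lt.symm

variable {σ τ : Equiv.Perm α}

lemma semiconjBy_mul_inv (hσ : Involutive σ) (hτ : Involutive τ) :
    SemiconjBy τ (σ * τ) (σ * τ)⁻¹ := by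
  rw [SemiconjBy, eq_inv_mul_iff_mul_eq]
  ext a
  simp [hσ _, hτ _]

lemma apply_zpow_mul_apply (hσ : Involutive σ) (hτ : Involutive τ) (k : ℤ) (a : α) :
    τ (((σ * τ) ^ k) a) = ((σ * τ) ^ (-k)) (τ a) := by
  rw [zpow_neg, ← inv_zpow]
  exact Equiv.congr_fun ((semiconjBy_mul_inv hσ hτ).zpow_right k).eq a

lemma sameCycle_mul_apply (hσ : Involutive σ) (hτ : Involutive τ) {a b : α}
    (h : (σ * τ).SameCycle a b) : (σ * τ).SameCycle (τ a) (τ b) := by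
  obtain ⟨k, rfl⟩ := h
  exact ⟨-k, (apply_zpow_mul_apply hσ hτ k a).symm⟩

lemma not_sameCycle_mul_apply (hσ : Involutive σ) (hτ : Involutive τ)
    (hσne : ∀ a, σ a ≠ a) (hτne : ∀ a, τ a ≠ a) (a : α) :
    ¬ (σ * τ).SameCycle a (τ a) := by
  rintro ⟨k, hk⟩
  have shift (j : ℤ) : τ (((σ * τ) ^ j) a) = ((σ * τ) ^ (k - j)) a := by
    rw [apply_zpow_mul_apply hσ hτ, ← hk, ← Equiv.Perm.mul_apply, ← zpow_add, neg_add_eq_sub]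
  obtain ⟨j, rfl | rfl⟩ := k.even_or_odd'
  · apply hτne (((σ * τ) ^ j) a)
    rw [shift, two_mul, add_sub_cancel_right]
  · apply hσne (τ (((σ * τ) ^ j) a))
    calc
      σ (τ (((σ * τ) ^ j) a)) = ((σ * τ) ^ (1 + j)) a := by rw [zpow_one_add]; rfl
      _ = ((σ * τ) ^ (2 * j + 1 - j)) a := by rw [show 1 + j = 2 * j + 1 - j by ring]
      _ = τ (((σ * τ) ^ j) a) := (shift j).symm

lemma exists_common_preimage_eq_compl {f g : α → α} (hf : Involutive f) (hg : Involutive g)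
    (hfne : ∀ a, f a ≠ a) (hgne : ∀ a, g a ≠ a) :
    ∃ S : Set α, f ⁻¹' S = Sᶜ ∧ g ⁻¹' S = Sᶜ := by
  let π := hf.toPerm * hg.toPerm
  let orbitSetoid := Equiv.Perm.SameCycle.setoid π
  let orbit : α → Quotient orbitSetoid := Quotient.mk _
  let gOrbit : Quotient orbitSetoid → Quotient orbitSetoid :=
    Quotient.map g fun _ _ => sameCycle_mul_apply hf hg
  have gOrbit_involutive : Involutive gOrbit :=
    Quotient.ind fun a => congrArg orbit (hg a)
  have gOrbit_ne : ∀ x, gOrbit x ≠ x := Quotient.ind fun a h =>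
    not_sameCycle_mul_apply hf hg hfne hgne a (Quotient.exact h.symm)
  have orbit_f (a : α) : orbit (f a) = orbit (g a) :=
    Quotient.sound (Equiv.Perm.SameCycle.symm ⟨1, by simp [π, hg a]⟩)
  obtain ⟨T, hT⟩ := exists_preimage_eq_compl gOrbit_involutive gOrbit_ne
  have mem_g (a : α) : orbit (g a) ∈ T ↔ orbit a ∉ T := Set.ext_iff.1 hT (orbit a)
  exact ⟨orbit ⁻¹' T, Set.ext fun a => by simpa [orbit_f] using mem_g a, Set.ext mem_g⟩

end Involutions

section Graphs

variable {V : Type*} {G : SimpleGraph V}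

/-- `D` is an orientation of `G`, where `D u v` means that there is an edge `{u, v}` and that it is
directed from `u` to `v`. The field `adj` excludes pairs of non-adjacent vertices related in both
directions, which `G.Adj u v ↔ Xor (D u v) (D v u)` alone would allow. -/
structure IsOrientation (G : SimpleGraph V) (D : V → V → Prop) : Prop where
  adj {u v : V} : D u v → G.Adj u v
  rel_iff_not_rel {u v : V} : G.Adj u v → (D u v ↔ ¬ D v u)

namespace IsOrientation

variable {D : V → V → Prop}

lemma adj_iff_xor (hD : IsOrientation G D) (u v : V) : G.Adj u v ↔ Xor (D u v) (D v u) :=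
  ⟨fun h => xor_iff_iff_not.2 (hD.rel_iff_not_rel h),
    fun h => h.or.elim hD.adj fun hvu => (hD.adj hvu).symm⟩

lemma mk_out_eq_mk_in (hD : IsOrientation G D) {v : V} (e : Equiv.Perm (G.neighborSet v))
    (he : ∀ x, D v (e x) ↔ ¬ D v x) : #{u // D v u} = #{u // D u v} := by
  have e_out : {x : G.neighborSet v // D v x} ≃ {u // D v u} :=
    Equiv.subtypeSubtypeEquivSubtype hD.adj
  have e_in : {x : G.neighborSet v // D x v} ≃ {u // D u v} :=
    Equiv.subtypeSubtypeEquivSubtype fun h => (hD.adj h).symm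
  have out_iff_in (x : G.neighborSet v) : D v x ↔ D (e x) v := by
    rw [hD.rel_iff_not_rel (e x).2.symm, he, not_not]
  exact (e_out.symm.trans ((e.subtypeEquiv out_iff_in).trans e_in)).cardinal_eq

end IsOrientation

/-- The relation on vertices whose pairs are the darts in `S`; it is used to read a set of darts as
an orientation. -/
def DartRel (S : Set G.Dart) (u v : V) : Prop :=
  ∃ h : G.Adj u v, ⟨(u, v), h⟩ ∈ S

/-- The map on darts that keeps the tail `v` of a dart and applies `f v` to its head. It turns a
pairing of the neighbors of each vertex into a pairing of darts. -/
def dartMap (f : ∀ v, G.neighborSet v → G.neighborSet v) (d : G.Dart) : G.Dart :=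
  G.dartOfNeighborSet d.fst (f d.fst ⟨d.snd, d.adj⟩)

lemma dartMap_involutive {f : ∀ v, G.neighborSet v → G.neighborSet v}
    (hf : ∀ v, Involutive (f v)) : Involutive (dartMap f) := fun d => by
  ext <;> simp [dartMap, SimpleGraph.dartOfNeighborSet, hf _ _]

lemma dartMap_ne {f : ∀ v, G.neighborSet v → G.neighborSet v}
    (hf : ∀ v x, f v x ≠ x) (d : G.Dart) : dartMap f d ≠ d := fun h =>
  hf d.fst ⟨d.snd, d.adj⟩ (Subtype.ext (congrArg (fun e : G.Dart => e.snd) h))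

lemma dartRel_iff_mem {S : Set G.Dart} {u v : V} (h : G.Adj u v) :
    DartRel S u v ↔ ⟨(u, v), h⟩ ∈ S :=
  exists_prop_of_true h

lemma isOrientation_dartRel {S : Set G.Dart} (hS : SimpleGraph.Dart.symm ⁻¹' S = Sᶜ) :
    IsOrientation G (DartRel S) where
  adj h := h.1
  rel_iff_not_rel {u v} h := by
    rw [dartRel_iff_mem h, dartRel_iff_mem h.symm, iff_not_comm]
    exact Set.ext_iff.1 hS ⟨(u, v), h⟩

lemma dartRel_apply_iff_not {S : Set G.Dart} {f : ∀ v, G.neighborSet v → G.neighborSet v}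
    (hS : dartMap f ⁻¹' S = Sᶜ) (v : V) (x : G.neighborSet v) :
    DartRel S v (f v x) ↔ ¬ DartRel S v x := by
  rw [dartRel_iff_mem (f v x).2, dartRel_iff_mem x.2]
  exact Set.ext_iff.1 hS ⟨(v, x), x.2⟩

end Graphs

end EulerianOrientation

open EulerianOrientation

/-- Every infinite cardinal is even, so only the finite degrees are constrained. -/
theorem eulerian_orientation_simpleGraph_general {V : Type*} (G : SimpleGraph V)
    (h : ∀ v, Even #(G.neighborSet v)) :
    ∃ D : V → V → Prop, IsOrientation G D ∧ ∀ v, #{u // D v u} = #{u // D u v} := by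
  choose f f_involutive f_ne using fun v => exists_involutive_ne_of_even_mk (h v)
  obtain ⟨S, hS_pair, hS_symm⟩ := exists_common_preimage_eq_compl
    (dartMap_involutive f_involutive) SimpleGraph.Dart.symm_involutive
    (dartMap_ne f_ne) SimpleGraph.Dart.symm_ne
  have hD : IsOrientation G (DartRel S) := isOrientation_dartRel hS_symm
  exact ⟨DartRel S, hD, fun v =>
    hD.mk_out_eq_mk_in (f_involutive v).toPerm (dartRel_apply_iff_not hS_pair v)⟩

/-- Every finite simple graph in which all degrees are even admits a Eulerian
orientation: a choice, for each edge, of exactly one direction, such that every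
vertex has out-degree equal to in-degree. -/
theorem eulerian_orientation_simpleGraph {V : Type*} [Fintype V] [DecidableEq V]
    (G : SimpleGraph V) [DecidableRel G.Adj]
    (h : ∀ v, Even (G.degree v)) :
    ∃ D : V → V → Prop,
      (∀ u v, G.Adj u v ↔ Xor' (D u v) (D v u)) ∧
      (∀ v, Nat.card {u // D v u} = Nat.card {u // D u v}) := by
  obtain ⟨D, hD, hcard⟩ := eulerian_orientation_simpleGraph_general G fun v => by
    simpa only [Cardinal.mk_fintype, G.card_neighborSet_eq_degree] using (h v).natCast
  exact ⟨D, hD.adj_iff_xor, fun v => congrArg Cardinal.toNat (hcard v)⟩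
end

section
/- Let V be a finite set, let E be a finite type, and let src, dst : E → V be functions (a finite directed multigraph). Suppose that for every vertex v ∈ V, the total degree |{e : src(e) = v}| + |{e : dst(e) = v}| is even. Then there exists a function σ : E → ℤ with σ(e) ∈ {1, −1} for every e, such that for every vertex v ∈ V, Σ_{e : src(e)=v} σ(e) = Σ_{e : dst(e)=v} σ(e). -/
open Finset

/-!
Give an edge from `a` to `b` the vector `δ_a - δ_b`; the net out-flow of an orientation is then a
signed sum of such vectors. Every finite multigraph has an orientation whose net out-flow is at
most one in absolute value at each vertex, by induction on the number of edges. If a new edge `e`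
meets an old edge `f` at some vertex, splice the two into a single edge, whose vector is that of `f`
plus or minus that of `e`, and orient `e` so that `f` and `e` are traversed as a path. If `e` meets
no old edge, any direction of `e` will do. At a vertex of even degree the net out-flow is even,
hence zero.
-/

/-- The vectors `δ_a - δ_b` recording an edge from `a` to `b` by what it contributes to the net
out-flow of each vertex. A self-loop, `a = b`, is recorded by the zero vector. -/
def IsEdgeVector {V : Type*} [DecidableEq V] (x : V → ℤ) : Prop :=
  ∃ a b, x = Pi.single a 1 - Pi.single b 1

namespace IsEdgeVector

variable {V : Type*} [DecidableEq V] {x y : V → ℤ} {v : V}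

lemma neg (hx : IsEdgeVector x) : IsEdgeVector (-x) := by
  obtain ⟨a, b, rfl⟩ := hx
  exact ⟨b, a, neg_sub _ _⟩

lemma units_smul (hx : IsEdgeVector x) (ε : ℤˣ) : IsEdgeVector (ε • x) := by
  obtain rfl | rfl := Int.units_eq_one_or ε
  · rwa [one_smul]
  · rw [Units.neg_smul, one_smul]
    exact hx.neg

lemma abs_apply_le_one (hx : IsEdgeVector x) (v : V) : |x v| ≤ 1 := by
  obtain ⟨a, b, rfl⟩ := hx
  simp only [Pi.sub_apply, Pi.single_apply]
  split_ifs <;> norm_num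

lemma exists_units_smul_eq_single_sub (hx : IsEdgeVector x) (hv : x v ≠ 0) :
    ∃ (ε : ℤˣ) (b : V), ε • x = Pi.single v 1 - Pi.single b 1 := by
  obtain ⟨a, b, rfl⟩ := hx
  obtain rfl | rfl : v = a ∨ v = b := by
    by_contra! hne
    simp [hne.1, hne.2] at hv
  · exact ⟨1, b, one_smul _ _⟩
  · exact ⟨-1, a, by rw [Units.neg_smul, one_smul, neg_sub]⟩

lemma exists_add_units_smul (hx : IsEdgeVector x) (hy : IsEdgeVector y) (hxv : x v ≠ 0)
    (hyv : y v ≠ 0) : ∃ ε : ℤˣ, IsEdgeVector (y + ε • x) := by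
  obtain ⟨ε, b, hb⟩ := hx.exists_units_smul_eq_single_sub hxv
  obtain ⟨η, c, hc⟩ := hy.exists_units_smul_eq_single_sub hyv
  have hsplice : IsEdgeVector (η • y - ε • x) := ⟨b, c, by rw [hb, hc]; abel⟩
  refine ⟨-(η⁻¹ * ε), ?_⟩
  convert hsplice.units_smul η⁻¹ using 1
  rw [smul_sub, inv_smul_smul, Units.neg_smul, mul_smul, sub_eq_add_neg]

end IsEdgeVector

lemma sum_insert_update_smul {E R M : Type*} [DecidableEq E] [Monoid R] [AddCommMonoid M]
    [DistribMulAction R M] {s : Finset E} {e f : E} (he : e ∉ s) (hf : f ∈ s) (σ : E → R)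
    (x : E → M) (r : R) :
    ∑ g ∈ insert e s, Function.update σ e (σ f * r) g • x g =
      ∑ g ∈ s, σ g • (x + Pi.single f (r • x e) : E → M) g := by
  have hupdate : ∑ g ∈ s, Function.update σ e (σ f * r) g • x g = ∑ g ∈ s, σ g • x g :=
    sum_congr rfl fun g hg => by rw [Function.update_of_ne (ne_of_mem_of_not_mem hg he)]
  have hsingle : ∑ g ∈ s, σ g • (Pi.single f (r • x e) : E → M) g = σ f • r • x e := by
    rw [sum_eq_single_of_mem f hf fun g _ hgf => by rw [Pi.single_eq_of_ne hgf, smul_zero],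
      Pi.single_eq_same]
  simp only [sum_insert he, Function.update_self, hupdate, Pi.add_apply, smul_add,
    sum_add_distrib, hsingle, mul_smul, add_comm]

lemma exists_units_abs_sum_smul_le_one {V E : Type*} [DecidableEq V] (s : Finset E)
    (x : E → V → ℤ) (hx : ∀ e ∈ s, IsEdgeVector (x e)) :
    ∃ σ : E → ℤˣ, ∀ v, |(∑ e ∈ s, σ e • x e) v| ≤ 1 := by
  classical
  induction s using Finset.induction_on generalizing x with
  | empty => exact ⟨1, by simp⟩
  | insert e s he ih =>
    obtain ⟨hxe, hxs⟩ := (forall_mem_insert _ _ _).1 hx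
    by_cases hmeet : ∃ f ∈ s, ∃ v, x e v ≠ 0 ∧ x f v ≠ 0
    · obtain ⟨f, hf, v, hev, hfv⟩ := hmeet
      obtain ⟨ε, hε⟩ := hxe.exists_add_units_smul (hxs f hf) hev hfv
      have hspliced : ∀ g ∈ s, IsEdgeVector ((x + Pi.single f (ε • x e) : E → V → ℤ) g) := by
        intro g hg
        obtain rfl | hgf := eq_or_ne g f
        · rwa [Pi.add_apply, Pi.single_eq_same]
        · rw [Pi.add_apply, Pi.single_eq_of_ne hgf, add_zero]
          exact hxs g hg
      obtain ⟨σ, hσ⟩ := ih _ hspliced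
      exact ⟨Function.update σ e (σ f * ε), by rwa [sum_insert_update_smul he hf]⟩
    · push Not at hmeet
      obtain ⟨σ, hσ⟩ := ih x hxs
      refine ⟨σ, fun v => ?_⟩
      rw [sum_insert he, Pi.add_apply]
      by_cases hev : x e v = 0
      · rw [Pi.smul_apply, hev, smul_zero, zero_add]
        exact hσ v
      · have hsum : (∑ f ∈ s, σ f • x f) v = 0 := by
          rw [Finset.sum_apply]
          exact sum_eq_zero fun f hf => by rw [Pi.smul_apply, hmeet f hf v hev, smul_zero]
        rw [hsum, add_zero]
        exact (hxe.units_smul (σ e)).abs_apply_le_one v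

lemma sum_smul_single_sub_single_apply {V E : Type*} [DecidableEq V] (s : Finset E)
    (src dst : E → V) (σ : E → ℤ) (v : V) :
    (∑ e ∈ s, σ e • (Pi.single (src e) 1 - Pi.single (dst e) 1 : V → ℤ)) v =
      ∑ e ∈ s with src e = v, σ e - ∑ e ∈ s with dst e = v, σ e := by
  simp [Finset.sum_apply, Pi.single_apply, mul_sub, sum_filter, eq_comm]

theorem eulerian_orientation_multigraph_general {V E : Type*} [DecidableEq V] [Fintype E]
    (src dst : E → V) :
    ∃ σ : E → ℤ, (∀ e, σ e = 1 ∨ σ e = -1) ∧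
      ∀ v : V, |∑ e with src e = v, σ e - ∑ e with dst e = v, σ e| ≤ 1 := by
  obtain ⟨σ, hσ⟩ := exists_units_abs_sum_smul_le_one univ
    (fun e => Pi.single (src e) 1 - Pi.single (dst e) 1) fun e _ => ⟨src e, dst e, rfl⟩
  refine ⟨fun e => σ e, fun e => Int.isUnit_iff.1 (σ e).isUnit, fun v => ?_⟩
  rw [← sum_smul_single_sub_single_apply]
  exact hσ v

lemma even_sum_iff_even_card {E : Type*} {s : Finset E} {σ : E → ℤ} (hσ : ∀ e ∈ s, Odd (σ e)) :
    Even (∑ e ∈ s, σ e) ↔ Even #s := by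
  have hdiff : Even (∑ e ∈ s, σ e - #s) := by
    rw [← nsmul_one, ← sum_const, ← sum_sub_distrib]
    exact even_sum _ fun e he => (hσ e he).sub_odd odd_one
  rw [Int.even_sub.1 hdiff, Int.even_coe_nat]

lemma sum_eq_sum_of_even_card_add_card {E : Type*} {s t : Finset E} {σ : E → ℤ}
    (hσ : ∀ e, Odd (σ e)) (hcard : Even (#s + #t))
    (hle : |∑ e ∈ s, σ e - ∑ e ∈ t, σ e| ≤ 1) : ∑ e ∈ s, σ e = ∑ e ∈ t, σ e := by
  have heven : Even (∑ e ∈ s, σ e - ∑ e ∈ t, σ e) := by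
    rwa [Int.even_sub, even_sum_iff_even_card fun e _ => hσ e,
      even_sum_iff_even_card fun e _ => hσ e, ← Nat.even_add]
  exact sub_eq_zero.1 (Int.eq_zero_of_abs_lt_dvd heven.two_dvd (by omega))

/-- A finite directed multigraph in which every vertex has even total degree
admits a Eulerian reorientation: a signing `σ : E → {1, -1}` such that at every
vertex the signed out-flow equals the signed in-flow. -/
theorem eulerian_orientation_multigraph {V E : Type*} [Fintype V] [DecidableEq V]
    [Fintype E] (src dst : E → V)
    (h : ∀ v : V, Even ((univ.filter fun e => src e = v).card
      + (univ.filter fun e => dst e = v).card)) :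
    ∃ σ : E → ℤ, (∀ e, σ e = 1 ∨ σ e = -1) ∧
      ∀ v : V, ∑ e ∈ univ.filter (fun e => src e = v), σ e
        = ∑ e ∈ univ.filter (fun e => dst e = v), σ e := by
  obtain ⟨σ, hσ, hle⟩ := eulerian_orientation_multigraph_general src dst
  have hodd (e : E) : Odd (σ e) := by rcases hσ e with he | he <;> simp [he]
  exact ⟨σ, hσ, fun v => sum_eq_sum_of_even_card_add_card hodd (h v) (hle v)⟩
end

section
/- Let G be a finite simple graph in which every vertex has even degree. Then there exist finitely many closed walks c₁, …, c_k in G, each of which is a cycle (a closed walk with no repeated edges and no repeated vertices other than its endpoints), such that the edge sets of c₁, …, c_k are pairwise disjoint and their union is the entire edge set of G. -/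
/-!
A graph with finitely many edges, at least one, and no cycle has a vertex with exactly one neighbor:
an endpoint of a longest path. Hence a nonempty graph with all degrees even contains a cycle. A
cycle uses zero or two edges at every vertex, so deleting its edges keeps all degrees even and
leaves fewer edges, and induction applies.
-/

section

variable {V : Type*} {G : SimpleGraph V}

lemma exists_neighborSet_eq_singleton_of_isAcyclic [Finite G.edgeSet] (hacyc : G.IsAcyclic)
    (hG : G ≠ ⊥) : ∃ v w, G.neighborSet v = {w} := by
  obtain ⟨a, b, hab⟩ := SimpleGraph.ne_bot_iff_exists_adj.mp hG
  have : Nonempty V := ⟨a⟩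
  obtain ⟨u, v, p, hp, hmax⟩ :=
    SimpleGraph.Walk.exists_isPath_forall_isPath_length_le_length G
  have hlen : 1 ≤ p.length := hmax _ _ hab.toWalk (.of_adj hab)
  have hnil : ¬p.Nil := by
    rw [← SimpleGraph.Walk.length_eq_zero_iff]
    exact Nat.one_le_iff_ne_zero.mp hlen
  have mem_support_of_adj : ∀ w, G.Adj u w → w ∈ p.support := by
    intro w huw
    by_contra hw
    exact (hmax _ _ (p.cons huw.symm) (hp.cons hw)).not_gt (Nat.lt_succ_self p.length)
  refine ⟨u, p.snd, Set.eq_singleton_iff_unique_mem.mpr ⟨p.adj_snd hnil, fun w huw => ?_⟩⟩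
  exact hacyc.eq_snd_of_adj_start hp huw (mem_support_of_adj w huw)

lemma exists_isCycle_of_even_ncard_neighborSet [Finite G.edgeSet] (hG : G ≠ ⊥)
    (heven : ∀ v, Even (G.neighborSet v).ncard) : ∃ (u : V) (c : G.Walk u u), c.IsCycle := by
  by_contra! hacyc
  obtain ⟨v, w, hvw⟩ := exists_neighborSet_eq_singleton_of_isAcyclic (fun u c => hacyc u c) hG
  have hone : Even 1 := by simpa only [hvw, Set.ncard_singleton] using heven v
  exact Nat.not_even_one hone

lemma even_ncard_neighborSet_toSubgraph_of_isCycle {u : V} {c : G.Walk u u} (hc : c.IsCycle)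
    (v : V) : Even (c.toSubgraph.neighborSet v).ncard := by
  by_cases hv : v ∈ c.support
  · rw [hc.ncard_neighborSet_toSubgraph_eq_two hv]
    exact even_two
  · have hempty : c.toSubgraph.neighborSet v = ∅ :=
      Set.eq_empty_of_forall_notMem fun w hvw => hv (c.mem_verts_toSubgraph.mp hvw.fst_mem)
    rw [hempty, Set.ncard_empty]
    exact Even.zero

lemma neighborSet_deleteEdges_edgeSet_walk {u w : V} (p : G.Walk u w) (v : V) :
    (G.deleteEdges p.edgeSet).neighborSet v = G.neighborSet v \ p.toSubgraph.neighborSet v := by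
  ext x
  simp [SimpleGraph.Walk.adj_toSubgraph_iff_mem_edges]

lemma even_ncard_neighborSet_deleteEdges_edgeSet_walk {u w v : V} {p : G.Walk u w}
    (hG : Even (G.neighborSet v).ncard) (hp : Even (p.toSubgraph.neighborSet v).ncard) :
    Even ((G.deleteEdges p.edgeSet).neighborSet v).ncard := by
  rw [neighborSet_deleteEdges_edgeSet_walk,
    Set.ncard_sdiff (p.toSubgraph.neighborSet_subset v) p.finite_neighborSet_toSubgraph]
  exact hG.tsub hp

lemma edgeSet_deleteEdges_edgeSet_walk_ssubset {u v : V} {p : G.Walk u v} (hp : ¬p.Nil) :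
    (G.deleteEdges p.edgeSet).edgeSet ⊂ G.edgeSet := by
  rw [SimpleGraph.edgeSet_deleteEdges]
  have hsub : p.edgeSet ⊆ G.edgeSet := fun _ he => p.edges_subset_edgeSet he
  have hne : p.edgeSet.Nonempty := ⟨s(u, p.snd), p.mk_start_snd_mem_edges hp⟩
  exact sdiff_lt hsub hne.ne_empty

end

/-- A cycle decomposition of `G`: a list of cycles of `G` whose edge sets partition the edge set of
`G`. Each cycle is stored as a closed walk together with its base point. -/
structure IsCycleDecomposition {V : Type*} (G : SimpleGraph V) (l : List ((v : V) × G.Walk v v)) :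
    Prop where
  isCycle : ∀ c ∈ l, c.2.IsCycle
  pairwise_disjoint : l.Pairwise fun c d => c.2.edges.Disjoint d.2.edges
  mem_edgeSet_iff : ∀ e, e ∈ G.edgeSet ↔ ∃ c ∈ l, e ∈ c.2.edges

namespace IsCycleDecomposition

variable {V : Type*} {G : SimpleGraph V}

lemma nil_bot : IsCycleDecomposition (⊥ : SimpleGraph V) [] where
  isCycle := by simp
  pairwise_disjoint := .nil
  mem_edgeSet_iff := by simp

lemma cons_map_mapLe {u : V} {c : G.Walk u u} (hc : c.IsCycle)
    {l : List ((v : V) × (G.deleteEdges c.edgeSet).Walk v v)}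
    (hl : IsCycleDecomposition (G.deleteEdges c.edgeSet) l) :
    IsCycleDecomposition G
      (⟨u, c⟩ :: l.map fun d => ⟨d.1, d.2.mapLe (G.deleteEdges_le c.edgeSet)⟩) where
  isCycle := by
    simp only [List.forall_mem_cons, List.forall_mem_map]
    exact ⟨hc, fun d hd => (hl.isCycle d hd).mapLe _⟩
  pairwise_disjoint := by
    simp only [List.pairwise_cons, List.forall_mem_map, List.pairwise_map,
      SimpleGraph.Walk.edges_mapLe_eq_edges]
    refine ⟨fun d _ e hec hed => ?_, hl.pairwise_disjoint⟩
    have he : e ∈ G.edgeSet \ c.edgeSet :=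
      G.edgeSet_deleteEdges c.edgeSet ▸ d.2.edges_subset_edgeSet hed
    exact he.2 hec
  mem_edgeSet_iff e := by
    have hsub : c.edgeSet ⊆ G.edgeSet := fun _ he => c.edges_subset_edgeSet he
    have hmem : e ∈ G.edgeSet ↔ e ∈ c.edges ∨ e ∈ (G.deleteEdges c.edgeSet).edgeSet := by
      rw [SimpleGraph.edgeSet_deleteEdges, ← SimpleGraph.Walk.mem_edgeSet, ← Set.mem_union,
        Set.union_sdiff_cancel hsub]
    simp only [hmem, hl.mem_edgeSet_iff, List.mem_cons, List.mem_map, exists_eq_or_imp,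
      exists_exists_and_eq_and, SimpleGraph.Walk.edges_mapLe_eq_edges]

end IsCycleDecomposition

-- Finitely many edges make every neighborhood finite, so `ncard` does not take its junk value.
theorem veblen_cycle_decomposition_general {V : Type*} (G : SimpleGraph V) [Finite G.edgeSet]
    (heven : ∀ v, Even (G.neighborSet v).ncard) :
    ∃ l : List ((v : V) × G.Walk v v), IsCycleDecomposition G l := by
  induction hn : G.edgeSet.ncard using Nat.strong_induction_on generalizing G with
  | h n ih =>
    by_cases hG : G = ⊥
    · subst hG
      exact ⟨[], .nil_bot⟩
    obtain ⟨u, c, hc⟩ := exists_isCycle_of_even_ncard_neighborSet hG heven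
    have hssub : (G.deleteEdges c.edgeSet).edgeSet ⊂ G.edgeSet :=
      edgeSet_deleteEdges_edgeSet_walk_ssubset hc.not_nil
    have : Finite (G.deleteEdges c.edgeSet).edgeSet := G.edgeSet.toFinite.subset hssub.subset
    have heven' : ∀ v, Even ((G.deleteEdges c.edgeSet).neighborSet v).ncard := fun v =>
      even_ncard_neighborSet_deleteEdges_edgeSet_walk (heven v)
        (even_ncard_neighborSet_toSubgraph_of_isCycle hc v)
    obtain ⟨l, hl⟩ := ih _ (hn ▸ Set.ncard_lt_ncard hssub) (G.deleteEdges c.edgeSet) heven' rfl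
    exact ⟨_, hl.cons_map_mapLe hc⟩

/-- Veblen's theorem: a finite simple graph in which every vertex has even
degree decomposes into finitely many edge-disjoint cycles whose edge sets
together cover the entire edge set. -/
theorem veblen_cycle_decomposition {V : Type*} [Fintype V] [DecidableEq V]
    (G : SimpleGraph V) [DecidableRel G.Adj]
    (h : ∀ v, Even (G.degree v)) :
    ∃ l : List ((v : V) × G.Walk v v),
      (∀ c ∈ l, c.2.IsCycle) ∧
      l.Pairwise (fun c d => ∀ e, e ∈ c.2.edges → e ∉ d.2.edges) ∧
      (∀ e, e ∈ G.edgeSet ↔ ∃ c ∈ l, e ∈ c.2.edges) := by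
  obtain ⟨l, hl⟩ := veblen_cycle_decomposition_general G fun v =>
    (Set.ncard_eq_toFinset_card' (G.neighborSet v)).symm ▸ h v
  exact ⟨l, hl.isCycle, hl.pairwise_disjoint, hl.mem_edgeSet_iff⟩
end

section
/- Let n ≥ 3 and let C_n be the cycle graph on vertex set ℤ/nℤ, with i adjacent to i+1 for every i. Let M be a maximal matching of C_n, i.e., a set of edges no two of which share a vertex, such that every edge of C_n shares a vertex with some edge of M. Let S ⊆ ℤ/nℤ be any set obtained by choosing exactly one endpoint of each edge of M. Then |S| ≤ n/2, and for every i ∈ ℤ/nℤ at least one of the vertices i, i+1, i+2, i+3 belongs to S. -/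
/-!
The matched edges are pairwise disjoint two-element sets of vertices, so there are at most `n / 2`
of them, and choosing endpoints produces no more vertices than there are edges. For the second
claim, maximality applied to the edge `{i + 1, i + 2}` gives a matched edge meeting it. Each
endpoint of that edge is adjacent to `i + 1` or to `i + 2`, hence lies in
`{i, i + 1, i + 2, i + 3}`, whichever endpoint was chosen. The same holds with the step `1` replaced
by any nonzero element `g` of a finite group, the cycle becoming a disjoint union of cycles,
or of single edges when `2 • g = 0`.
-/

open Finset SimpleGraph

section Matching

variable {V : Type*}

theorem two_mul_card_le_card_of_pairwiseDisjoint_toFinset [Fintype V] [DecidableEq V]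
    {M : Finset (Sym2 V)} (hdiag : ∀ e ∈ M, ¬e.IsDiag)
    (hdisj : (M : Set (Sym2 V)).PairwiseDisjoint Sym2.toFinset) :
    2 * #M ≤ Fintype.card V :=
  calc
    2 * #M = ∑ e ∈ M, #e.toFinset := by
      rw [sum_const_nat fun e he ↦ e.card_toFinset_of_not_isDiag (hdiag e he), mul_comm]
    _ = #(M.biUnion Sym2.toFinset) := (card_biUnion hdisj).symm
    _ ≤ Fintype.card V := card_le_univ _

theorem exists_mem_adj_or_adj_of_adj {G : SimpleGraph V} {M : Set (Sym2 V)} {ch : Sym2 V → V}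
    (hM : M ⊆ G.edgeSet) (hmax : ∀ e ∈ G.edgeSet, ∃ e' ∈ M, ∃ v, v ∈ e ∧ v ∈ e')
    (hch : ∀ e ∈ M, ch e ∈ e) {u v : V} (huv : G.Adj u v) :
    ∃ e ∈ M, G.Adj u (ch e) ∨ G.Adj v (ch e) := by
  obtain ⟨e, he, x, hx, hxe⟩ := hmax s(u, v) huv
  have eq_or_adj : x = ch e ∨ G.Adj x (ch e) :=
    or_iff_not_imp_left.2 fun hne ↦
      G.adj_iff_exists_edge.2 ⟨hne, e, hM he, hxe, hch e he⟩
  refine ⟨e, he, ?_⟩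
  rcases Sym2.mem_iff.1 hx with rfl | rfl
  · exact eq_or_adj.elim (fun h ↦ .inr (h ▸ huv.symm)) .inl
  · exact eq_or_adj.elim (fun h ↦ .inl (h ▸ huv)) .inr

end Matching

section Circulant

variable {A : Type*} [AddGroup A] {g : A}

theorem circulantGraph_singleton_adj {u v : A} :
    (circulantGraph {g}).Adj u v ↔ u ≠ v ∧ (v = g + u ∨ u = g + v) := by
  simp only [circulantGraph_adj, Set.mem_singleton_iff, sub_eq_iff_eq_add, or_comm]

theorem circulantGraph_singleton_adj_add (hg : g ≠ 0) (u : A) :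
    (circulantGraph {g}).Adj u (g + u) :=
  circulantGraph_singleton_adj.2 ⟨by simpa using hg, .inl rfl⟩

theorem eq_or_eq_of_circulantGraph_singleton_adj_add {u v : A}
    (h : (circulantGraph {g}).Adj (g + u) v) : v = u ∨ v = 2 • g + u := by
  rw [two_nsmul, add_assoc]
  exact (circulantGraph_singleton_adj.1 h).2.symm.imp_left fun h ↦ (add_left_cancel h).symm

theorem exists_mem_four_consecutive_of_circulantGraph_singleton (hg : g ≠ 0) {M : Set (Sym2 A)}
    {ch : Sym2 A → A} (hM : M ⊆ (circulantGraph {g}).edgeSet)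
    (hmax : ∀ e ∈ (circulantGraph {g}).edgeSet, ∃ e' ∈ M, ∃ v, v ∈ e ∧ v ∈ e')
    (hch : ∀ e ∈ M, ch e ∈ e) (i : A) :
    ∃ e ∈ M, ch e = i ∨ ch e = g + i ∨ ch e = 2 • g + i ∨ ch e = 3 • g + i := by
  obtain ⟨e, he, hadj⟩ :=
    exists_mem_adj_or_adj_of_adj hM hmax hch (circulantGraph_singleton_adj_add hg (g + i))
  refine ⟨e, he, ?_⟩
  rcases hadj with hadj | hadj
  · rcases eq_or_eq_of_circulantGraph_singleton_adj_add hadj with h | h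
    · exact .inl h
    · exact .inr (.inr (.inl h))
  · rcases eq_or_eq_of_circulantGraph_singleton_adj_add hadj with h | h
    · exact .inr (.inl h)
    · rw [← add_assoc, ← succ_nsmul] at h
      exact .inr (.inr (.inr h))

theorem maximal_matching_marking_cycle_general [Fintype A] [DecidableEq A] (hg : g ≠ 0)
    {M : Finset (Sym2 A)} {ch : Sym2 A → A} (hM : ∀ e ∈ M, e ∈ (circulantGraph {g}).edgeSet)
    (hdisj : ∀ e ∈ M, ∀ e' ∈ M, e ≠ e' → ∀ v, ¬(v ∈ e ∧ v ∈ e'))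
    (hmax : ∀ e ∈ (circulantGraph {g}).edgeSet, ∃ e' ∈ M, ∃ v, v ∈ e ∧ v ∈ e')
    (hch : ∀ e ∈ M, ch e ∈ e) :
    2 * #(M.image ch) ≤ Fintype.card A ∧ ∀ i : A, i ∈ M.image ch ∨ g + i ∈ M.image ch ∨
      2 • g + i ∈ M.image ch ∨ 3 • g + i ∈ M.image ch := by
  have hdisj' : (M : Set (Sym2 A)).PairwiseDisjoint Sym2.toFinset :=
    fun e he e' he' hne ↦ disjoint_left.2 fun v hv hv' ↦
      hdisj e he e' he' hne v ⟨Sym2.mem_toFinset.1 hv, Sym2.mem_toFinset.1 hv'⟩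
  refine ⟨?_, fun i ↦ ?_⟩
  · calc
      2 * #(M.image ch) ≤ 2 * #M := Nat.mul_le_mul_left 2 card_image_le
      _ ≤ Fintype.card A := two_mul_card_le_card_of_pairwiseDisjoint_toFinset
        (fun e he ↦ not_isDiag_of_mem_edgeSet _ (hM e he)) hdisj'
  · simpa only [mem_image, ← exists_or, ← and_or_left, mem_coe] using
      exists_mem_four_consecutive_of_circulantGraph_singleton hg hM hmax hch i

end Circulant

/-- Choosing one endpoint of each edge of a maximal matching of the cycle graph
`C_n` (`n ≥ 3`) yields a set `S` with `|S| ≤ n/2` such that among any four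
consecutive vertices `i, i+1, i+2, i+3` at least one belongs to `S`. -/
theorem maximal_matching_marking_cycle (n : ℕ) [NeZero n] (hn : 3 ≤ n)
    (Cyc : SimpleGraph (ZMod n))
    (hCyc : ∀ u v : ZMod n, Cyc.Adj u v ↔ (u ≠ v ∧ (v = u + 1 ∨ u = v + 1)))
    (M : Finset (Sym2 (ZMod n)))
    (hME : ∀ e ∈ M, e ∈ Cyc.edgeSet)
    (hMdisj : ∀ e ∈ M, ∀ e' ∈ M, e ≠ e' → ∀ v : ZMod n, ¬(v ∈ e ∧ v ∈ e'))
    (hMmax : ∀ e ∈ Cyc.edgeSet, ∃ e' ∈ M, ∃ v : ZMod n, v ∈ e ∧ v ∈ e')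
    (ch : Sym2 (ZMod n) → ZMod n) (hch : ∀ e ∈ M, ch e ∈ e)
    (S : Finset (ZMod n)) (hS : S = M.image ch) :
    2 * S.card ≤ n ∧
      ∀ i : ZMod n, i ∈ S ∨ i + 1 ∈ S ∨ i + 2 ∈ S ∨ i + 3 ∈ S := by
  have : Fact (1 < n) := ⟨by lia⟩
  obtain rfl : Cyc = circulantGraph {1} := by
    ext u v
    rw [hCyc, circulantGraph_singleton_adj, add_comm 1 u, add_comm 1 v]
  simpa [hS, add_comm] using
    maximal_matching_marking_cycle_general one_ne_zero hME hMdisj hMmax hch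
end

section
/- Let V be a finite set, let E be a finite type with maps src, dst : E → V (a finite directed multigraph), let Δ > 0 be a real number, and let f : E → ℝ be such that f(e)/Δ is an integer for every e ∈ E. Suppose that for every vertex v ∈ V, the net flow Σ_{e : src(e)=v} f(e) − Σ_{e : dst(e)=v} f(e) is an integer multiple of 2Δ. Then for every vertex v ∈ V, the number of incidences of edges e with f(e)/Δ odd at v, counted as |{e : src(e) = v and f(e)/Δ is odd}| + |{e : dst(e) = v and f(e)/Δ is odd}|, is even. -/
open Finset

/-!
When `Δ` has even or infinite additive order (both covered by `Even (addOrderOf Δ)`, as infinite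
order is encoded by `0`), `m • Δ` determines the parity of `m`. Writing `f e = g e • Δ` thus reduces
the claim to integers, where a sum has the same parity as its number of odd terms.
-/

theorem even_card_filter_odd_iff_even_sum {ι : Type*} (s : Finset ι) (g : ι → ℤ)
    [DecidablePred fun i => Odd (g i)] :
    Even (s.filter fun i => Odd (g i)).card ↔ Even (∑ i ∈ s, g i) := by
  induction s using Finset.cons_induction with
  | empty => simp
  | cons a s ha ih =>
    rw [filter_cons, sum_cons, Int.even_add, ← ih, ← Int.not_odd_iff_even]
    split_ifs with h <;> simp [h, Nat.even_add_one]

section EvenOrder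

variable {A : Type*} [AddCommGroup A] {Δ : A}

theorem even_iff_even_of_zsmul_eq_zsmul (hΔ : Even (addOrderOf Δ)) {m n : ℤ}
    (h : m • Δ = n • Δ) : Even m ↔ Even n := by
  have two_dvd_order : (2 : ℤ) ∣ addOrderOf Δ := mod_cast hΔ.two_dvd
  have order_dvd_sub : (addOrderOf Δ : ℤ) ∣ m - n := by
    rw [addOrderOf_dvd_iff_zsmul_eq_zero, sub_smul, h, sub_self]
  exact Int.even_sub.mp (even_iff_two_dvd.mpr (two_dvd_order.trans order_dvd_sub))

theorem exists_odd_zsmul_eq_zsmul_iff (hΔ : Even (addOrderOf Δ)) (m : ℤ) :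
    (∃ z : ℤ, Odd z ∧ m • Δ = z • Δ) ↔ Odd m := by
  refine ⟨fun ⟨z, hz, h⟩ => ?_, fun hm => ⟨m, hm, rfl⟩⟩
  rw [← Int.not_even_iff_odd] at hz ⊢
  rwa [even_iff_even_of_zsmul_eq_zsmul hΔ h]

theorem exists_zsmul_eq_zsmul_two_nsmul_iff (hΔ : Even (addOrderOf Δ)) (m : ℤ) :
    (∃ z : ℤ, m • Δ = z • (2 • Δ)) ↔ Even m := by
  have zsmul_two_nsmul (z : ℤ) : z • (2 • Δ) = (z * 2) • Δ := by
    rw [mul_smul, ofNat_zsmul]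
  simp only [zsmul_two_nsmul]
  constructor
  · rintro ⟨z, h⟩
    exact (even_iff_even_of_zsmul_eq_zsmul hΔ h).mpr (even_two.mul_left z)
  · intro hm
    obtain ⟨z, rfl⟩ := even_iff_exists_two_mul.mp hm
    exact ⟨z, by rw [mul_comm]⟩

open scoped Classical in
theorem odd_edges_even_degree_general {V E : Type*} [DecidableEq V] [Fintype E]
    (hΔ : Even (addOrderOf Δ)) (src dst : E → V) (f : E → A)
    (hint : ∀ e, ∃ z : ℤ, f e = z • Δ) (v : V) :
    Even ((univ.filter fun e => src e = v ∧ ∃ z : ℤ, Odd z ∧ f e = z • Δ).card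
        + (univ.filter fun e => dst e = v ∧ ∃ z : ℤ, Odd z ∧ f e = z • Δ).card) ↔
      ∃ z : ℤ, (∑ e ∈ univ.filter (fun e => src e = v), f e)
        - (∑ e ∈ univ.filter (fun e => dst e = v), f e) = z • (2 • Δ) := by
  choose g hg using hint
  simp only [hg, exists_odd_zsmul_eq_zsmul_iff hΔ, ← filter_filter, Nat.even_add,
    even_card_filter_odd_iff_even_sum]
  rw [← sum_smul, ← sum_smul, ← sub_smul, exists_zsmul_eq_zsmul_two_nsmul_iff hΔ, Int.even_sub]

end EvenOrder

open scoped Classical in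
/-- If every flow value `f(e)` is an integer multiple of `Δ` and every net flow
is an integer multiple of `2Δ`, then at every vertex the number of incidences of
edges whose value is an odd multiple of `Δ` is even. -/
theorem odd_edges_even_degree {V E : Type*} [Fintype V] [DecidableEq V] [Fintype E]
    (src dst : E → V) (Δ : ℝ) (hΔ : 0 < Δ) (f : E → ℝ)
    (hint : ∀ e, ∃ z : ℤ, f e = z * Δ)
    (hnet : ∀ v : V, ∃ z : ℤ,
      (∑ e ∈ univ.filter (fun e => src e = v), f e)
        - (∑ e ∈ univ.filter (fun e => dst e = v), f e) = z * (2 * Δ)) :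
    ∀ v : V,
      Even ((univ.filter fun e => src e = v ∧ ∃ z : ℤ, Odd z ∧ f e = z * Δ).card
        + (univ.filter fun e => dst e = v ∧ ∃ z : ℤ, Odd z ∧ f e = z * Δ).card) := by
  have hord : Even (addOrderOf Δ) := by
    simp [addOrderOf_eq_zero (not_isOfFinAddOrder_of_isAddTorsionFree hΔ.ne')]
  simp only [← zsmul_eq_mul, two_mul, ← two_nsmul] at hint hnet ⊢
  exact fun v => (odd_edges_even_degree_general hord src dst f hint v).mpr (hnet v)
end

section
/- Let V be a finite set, let E be a finite type with maps src, dst : E → V (a finite directed multigraph), let s, t ∈ V be distinct vertices, let Δ = 2^(−k) for some natural number k, and let f : E → ℝ be such that f(e) ≥ 0 and f(e)/Δ is an integer for every e ∈ E, and f is conserved at every vertex v ∉ {s, t}, i.e., Σ_{e : src(e)=v} f(e) = Σ_{e : dst(e)=v} f(e). Then there exists f' : E → ℝ with f'(e) ∈ {⌊f(e)⌋, ⌈f(e)⌉} for every e ∈ E, f' conserved at every vertex v ∉ {s, t}, and value(f') ≥ value(f), where value(g) := Σ_{e : src(e)=s} g(e) − Σ_{e : dst(e)=s} g(e). -/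
open Finset

/-!
A return edge from `t` to `s` carrying the value of `f` turns the flow into a circulation, so it
suffices to round circulations without decreasing a prescribed linear functional.

By conservation no vertex of a circulation meets exactly one end of a non-integral edge, so the
non-integral edges span at most as many vertices as there are of them. A set of edges with linearly
independent boundaries is a forest and has fewer edges than vertices; hence some nonzero circulation
`d` lives on the non-integral edges. Up to sign `d` does not decrease the functional, and moving
along it until an edge reaches one of its integral bounds makes a further edge integral.
-/

section NetOutflow

variable {R V E : Type*} [Ring R] [DecidableEq V]

/-- The boundary `[src e] - [dst e]` of the edge `e`, i.e. the column of `e` in the incidence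
matrix; it is oriented so that outflow counts positively, and a self-loop has boundary `0`. -/
def edgeBoundary (src dst : E → V) (e : E) : V → R :=
  Pi.single (src e) 1 - Pi.single (dst e) 1

/-- The net flow out of each vertex, as a linear function of the flow. Its kernel consists of the
circulations, the flows conserved at every vertex. -/
def netOutflow [Fintype E] (src dst : E → V) : (E → R) →ₗ[R] V → R :=
  Fintype.linearCombination R (edgeBoundary src dst)

variable [Fintype E]

lemma netOutflow_apply (src dst : E → V) (f : E → R) (v : V) :
    netOutflow src dst f v = ∑ e with src e = v, f e - ∑ e with dst e = v, f e := by
  simp [netOutflow, Fintype.linearCombination_apply, edgeBoundary, Pi.single_apply, mul_sub,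
    sum_filter, eq_comm]

lemma netOutflow_addEdge (src dst : E → V) (a b : V) (f : Option E → R) :
    netOutflow (fun o : Option E => o.elim a src) (fun o => o.elim b dst) f =
      netOutflow src dst (fun e => f (some e)) + f none • (Pi.single a 1 - Pi.single b 1) := by
  rw [netOutflow, Fintype.linearCombination_apply, Fintype.sum_option, add_comm]
  rfl

lemma sum_netOutflow_eq_zero {src dst : E → V} {W : Finset V} (hsrc : ∀ e, src e ∈ W)
    (hdst : ∀ e, dst e ∈ W) (f : E → R) : ∑ v ∈ W, netOutflow src dst f v = 0 := by
  simp only [netOutflow_apply, sum_sub_distrib]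
  rw [sum_fiberwise_of_maps_to fun e _ => hsrc e, sum_fiberwise_of_maps_to fun e _ => hdst e,
    sub_self]

lemma netOutflow_eq_zero_of_forall_ne {src dst : E → V} {f : E → R} (r : V)
    (hf : ∀ v, v ≠ r → netOutflow src dst f v = 0) : netOutflow src dst f = 0 := by
  let W : Finset V := insert r (univ.image src ∪ univ.image dst)
  have hsum : ∑ v ∈ W, netOutflow src dst f v = 0 :=
    sum_netOutflow_eq_zero (by simp [W]) (by simp [W]) f
  rw [sum_eq_single_of_mem r (mem_insert_self _ _) fun v _ => hf v] at hsum
  funext v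
  obtain rfl | hv := eq_or_ne v r
  exacts [hsum, hf v hv]

lemma netOutflow_returnEdge_eq_zero {src dst : E → V} {s t : V} {f : E → R}
    (hcons : ∀ v, v ≠ s → v ≠ t → netOutflow src dst f v = 0) :
    netOutflow (fun o : Option E => o.elim t src) (fun o => o.elim s dst)
      (fun o => o.elim (netOutflow src dst f s) f) = 0 := by
  refine netOutflow_eq_zero_of_forall_ne t fun v hvt => ?_
  rw [netOutflow_addEdge]
  obtain rfl | hvs := eq_or_ne v s
  · simp [hvt]
  · simp [hcons v hvs hvt, hvs, hvt]

lemma netOutflow_eq_of_returnEdge {src dst : E → V} {s t : V} {f : Option E → R}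
    (hf : netOutflow (fun o : Option E => o.elim t src) (fun o => o.elim s dst) f = 0) (v : V) :
    netOutflow src dst (fun e => f (some e)) v =
      f none * ((if v = s then 1 else 0) - if v = t then 1 else 0) := by
  rw [netOutflow_addEdge] at hf
  rw [eq_neg_of_add_eq_zero_left hf, ← smul_neg, neg_sub]
  simp [Pi.single_apply]

end NetOutflow

section Degree

variable {V E : Type*} [DecidableEq V]

/-- The vertices incident to an edge of `F`. The disjoint sum `F.disjSum F` lists the edge ends,
sources on the left and destinations on the right. -/
def endpoints (src dst : E → V) (F : Finset E) : Finset V :=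
  (F.disjSum F).image (Sum.elim src dst)

/-- The number of ends at `v` of edges of `F`; a self-loop counts twice. -/
def edgeDegree (src dst : E → V) (F : Finset E) (v : V) : ℕ :=
  #{x ∈ F.disjSum F | Sum.elim src dst x = v}

lemma src_mem_endpoints {src dst : E → V} {F : Finset E} {e : E} (he : e ∈ F) :
    src e ∈ endpoints src dst F :=
  mem_image_of_mem (Sum.elim src dst) (inl_mem_disjSum.2 he)

lemma dst_mem_endpoints {src dst : E → V} {F : Finset E} {e : E} (he : e ∈ F) :
    dst e ∈ endpoints src dst F :=
  mem_image_of_mem (Sum.elim src dst) (inr_mem_disjSum.2 he)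

lemma card_endpoints_le {src dst : E → V} {F : Finset E} (hF : ∀ v, edgeDegree src dst F v ≠ 1) :
    #(endpoints src dst F) ≤ #F := by
  have two_le_degree : ∀ v ∈ endpoints src dst F, 2 ≤ edgeDegree src dst F v := fun v hv =>
    have hpos : 0 < edgeDegree src dst F v :=
      card_pos.2 (fiber_nonempty_iff_mem_image.2 hv)
    (Nat.two_le_iff _).2 ⟨hpos.ne', hF v⟩
  have handshake : 2 * #(endpoints src dst F) ≤ #(F.disjSum F) :=
    mul_card_image_le_card _ 2 two_le_degree
  rw [card_disjSum] at handshake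
  lia

lemma card_lt_card_endpoints_of_linearIndepOn {R : Type*} [Ring R] [StrongRankCondition R]
    {src dst : E → V} {F : Finset E} (hF : F.Nonempty)
    (hind : LinearIndepOn R (edgeBoundary src dst : E → V → R) F) :
    #F < #(endpoints src dst F) := by
  classical
  obtain ⟨e₀, he₀⟩ := hF
  let r := src e₀
  have hr : r ∈ endpoints src dst F := src_mem_endpoints he₀
  let B : Finset (V → R) :=
    ((endpoints src dst F).erase r).image fun v => Pi.single v 1 - Pi.single r 1
  have single_sub_mem : ∀ v ∈ endpoints src dst F,
      (Pi.single v 1 - Pi.single r 1 : V → R) ∈ Submodule.span R (B : Set (V → R)) := by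
    intro v hv
    obtain rfl | hvr := eq_or_ne v r
    · simp
    · exact Submodule.subset_span (mem_image_of_mem _ (mem_erase.2 ⟨hvr, hv⟩))
  have boundary_mem : ∀ e ∈ F,
      (edgeBoundary src dst e : V → R) ∈ Submodule.span R (B : Set (V → R)) := by
    intro e he
    rw [edgeBoundary, ← sub_sub_sub_cancel_right _ _ (Pi.single r 1)]
    exact sub_mem (single_sub_mem _ (src_mem_endpoints he))
      (single_sub_mem _ (dst_mem_endpoints he))
  have hcard : #F ≤ #B := by
    simpa using linearIndependent_le_span' _ hind (B : Set (V → R))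
      (Set.range_subset_iff.2 fun e => boundary_mem e e.2)
  calc #F ≤ #B := hcard
    _ ≤ #((endpoints src dst F).erase r) := card_image_le
    _ < #(endpoints src dst F) := card_erase_lt_of_mem hr

lemma exists_circulation_ne_zero {R : Type*} [Ring R] [StrongRankCondition R] [Fintype E]
    {src dst : E → V} {F : Finset E} (hF : F.Nonempty) (hdeg : ∀ v, edgeDegree src dst F v ≠ 1) :
    ∃ d : E → R, d ≠ 0 ∧ (∀ e ∉ F, d e = 0) ∧ netOutflow src dst d = 0 := by
  have hdep : ¬LinearIndepOn R (edgeBoundary src dst : E → V → R) F := fun hind =>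
    (card_lt_card_endpoints_of_linearIndepOn hF hind).not_ge (card_endpoints_le hdeg)
  rw [linearIndepOn_iff] at hdep
  push Not at hdep
  obtain ⟨d, hsupp, hd, hne⟩ := hdep
  refine ⟨d, DFunLike.coe_injective.ne hne, fun e he => ?_, ?_⟩
  · exact Finsupp.notMem_support_iff.1 fun hmem => he (hsupp hmem)
  · rw [netOutflow, ← Finsupp.linearCombination_eq_fintype_linearCombination_apply R]
    simpa using hd

end Degree

lemma card_filter_notMem_ne_one {ι G : Type*} [AddCommGroup G] (H : AddSubgroup G)
    [DecidablePred (· ∈ H)] {s : Finset ι} {f : ι → G} (hsum : ∑ i ∈ s, f i ∈ H) :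
    #{i ∈ s | f i ∉ H} ≠ 1 := by
  intro hcard
  obtain ⟨a, ha⟩ := card_eq_one.1 hcard
  have hrest : ∑ i ∈ s with f i ∈ H, f i ∈ H := sum_mem fun i hi => (mem_filter.1 hi).2
  have haH : f a ∉ H := (mem_filter.1 (ha.symm.subset (mem_singleton_self a))).2
  rw [← sum_filter_add_sum_filter_not s (f · ∈ H), ha, sum_singleton] at hsum
  exact haH ((H.add_mem_cancel_left hrest).1 hsum)

section FracSupport

variable {K ι : Type*} [Ring K] [LinearOrder K] [FloorRing K] [Fintype ι]

/-- The finite set of indices at which `f` is not an integer. -/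
def fracSupport (f : ι → K) : Finset ι := {i | Int.fract (f i) ≠ 0}

variable [IsStrictOrderedRing K]

lemma notMem_fracSupport {f : ι → K} {i : ι} : i ∉ fracSupport f ↔ ∃ z : ℤ, (z : K) = f i := by
  simp [fracSupport, Int.fract_eq_zero_iff]

lemma fracSupport_eq_empty {f : ι → K} :
    fracSupport f = ∅ ↔ ∃ g : ι → ℤ, (fun i => (g i : K)) = f := by
  simp only [eq_empty_iff_forall_notMem, notMem_fracSupport, Classical.skolem, funext_iff]

lemma edgeDegree_fracSupport_ne_one {V : Type*} [DecidableEq V] {src dst : ι → V} {f : ι → K}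
    {v : V} (hf : netOutflow src dst f v = 0) : edgeDegree src dst (fracSupport f) v ≠ 1 := by
  classical
  let Z : AddSubgroup K := (Int.castAddHom K).range
  let ends : Finset (ι ⊕ ι) := disjSum {e | src e = v} {e | dst e = v}
  let signedFlow : ι ⊕ ι → K := Sum.elim f (-f)
  have sum_ends : ∑ x ∈ ends, signedFlow x = netOutflow src dst f v := by
    simp [ends, signedFlow, netOutflow_apply, sum_disjSum, sub_eq_add_neg]
  have frac_ends : edgeDegree src dst (fracSupport f) v = #{x ∈ ends | signedFlow x ∉ Z} := by
    have mem_iff (i : ι) : i ∈ fracSupport f ↔ f i ∉ Z := by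
      rw [← not_iff_not, not_not, notMem_fracSupport]
      rfl
    refine congrArg card (Finset.ext ?_)
    rintro (i | i) <;> simp [ends, signedFlow, mem_iff, and_comm]
  rw [frac_ends]
  exact card_filter_notMem_ne_one Z (by simp [sum_ends, hf])

end FracSupport

section Ray

variable {K : Type*} [Field K] [LinearOrder K] [IsStrictOrderedRing K]

lemma exists_exit_time {l u x d : K} (hx : x ∈ Set.Icc l u) (hd : d ≠ 0) :
    ∃ τ : K, 0 ≤ τ ∧ (x + τ * d = l ∨ x + τ * d = u) ∧
      ∀ c ∈ Set.Icc 0 τ, x + c * d ∈ Set.Icc l u := by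
  obtain ⟨hl, hu⟩ := hx
  obtain hneg | hpos := lt_or_gt_of_ne hd
  · refine ⟨(l - x) / d, div_nonneg_of_nonpos (by linarith) hneg.le,
      .inl (by field_simp; ring), fun c ⟨hc, hcτ⟩ => ?_⟩
    rw [le_div_iff_of_neg hneg] at hcτ
    have := mul_nonpos_of_nonneg_of_nonpos hc hneg.le
    constructor <;> linarith
  · refine ⟨(u - x) / d, div_nonneg (by linarith) hpos.le,
      .inr (by field_simp; ring), fun c ⟨hc, hcτ⟩ => ?_⟩
    rw [le_div_iff₀ hpos] at hcτ
    have := mul_nonneg hc hpos.le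
    constructor <;> linarith

lemma exists_exit_time_pi {ι : Type*} [Finite ι] {l u x d : ι → K}
    (hx : ∀ i, x i ∈ Set.Icc (l i) (u i)) (hd : d ≠ 0) :
    ∃ c : K, 0 ≤ c ∧ (∀ i, (x + c • d) i ∈ Set.Icc (l i) (u i)) ∧
      ∃ i, d i ≠ 0 ∧ ((x + c • d) i = l i ∨ (x + c • d) i = u i) := by
  choose! τ hτ_nonneg hτ_end hτ_mem using fun i (hi : d i ≠ 0) => exists_exit_time (hx i) hi
  obtain ⟨j, hj, hmin⟩ := Set.exists_min_image {i | d i ≠ 0} τ (Set.toFinite _)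
    (Function.ne_iff.1 hd)
  refine ⟨τ j, hτ_nonneg j hj, fun i => ?_, j, hj, hτ_end j hj⟩
  by_cases hi : d i = 0
  · simpa [hi] using hx i
  · exact hτ_mem i hi _ ⟨hτ_nonneg j hj, hmin i hi⟩

lemma exists_fracSupport_ssubset {ι : Type*} [Fintype ι] [FloorRing K] {l u : ι → ℤ}
    {f d : ι → K} (hf : ∀ i, f i ∈ Set.Icc (l i : K) (u i)) (hd : d ≠ 0)
    (hsupp : ∀ i ∉ fracSupport f, d i = 0) :
    ∃ c : K, 0 ≤ c ∧ (∀ i, (f + c • d) i ∈ Set.Icc (l i : K) (u i)) ∧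
      fracSupport (f + c • d) ⊂ fracSupport f := by
  obtain ⟨c, hc, hmem, j, hdj, hj⟩ := exists_exit_time_pi hf hd
  have fixed : ∀ i ∉ fracSupport f, (f + c • d) i = f i := fun i hi => by simp [hsupp i hi]
  have hj_int : j ∉ fracSupport (f + c • d) :=
    notMem_fracSupport.2 (hj.elim (fun h => ⟨l j, h.symm⟩) fun h => ⟨u j, h.symm⟩)
  refine ⟨c, hc, hmem, Finset.ssubset_iff_subset_ne.2 ⟨fun i => ?_, fun heq => ?_⟩⟩
  · contrapose
    intro hi
    rwa [notMem_fracSupport, fixed i hi, ← notMem_fracSupport]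
  · exact hdj (hsupp j (heq ▸ hj_int))

end Ray

lemma eq_floor_or_eq_ceil {K : Type*} [Ring K] [LinearOrder K] [FloorRing K] {x : K} {n : ℤ}
    (hn : n ∈ Set.Icc ⌊x⌋ ⌈x⌉) : n = ⌊x⌋ ∨ n = ⌈x⌉ := by
  have := Int.ceil_le_floor_add_one x
  have := hn.1
  have := hn.2
  lia

section Rounding

variable {K V E : Type*} [Field K] [LinearOrder K] [IsStrictOrderedRing K] [FloorRing K]
  [DecidableEq V] [Fintype E]

lemma exists_circulation_on_fracSupport {src dst : E → V} {f : E → K}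
    (hf : netOutflow src dst f = 0) (hfrac : (fracSupport f).Nonempty) (φ : (E → K) →ₗ[K] K) :
    ∃ d : E → K, d ≠ 0 ∧ (∀ e ∉ fracSupport f, d e = 0) ∧ netOutflow src dst d = 0 ∧ 0 ≤ φ d := by
  obtain ⟨d, hne, hsupp, hd⟩ := exists_circulation_ne_zero (R := K) hfrac fun v =>
    edgeDegree_fracSupport_ne_one (congrFun hf v)
  obtain hφ | hφ := le_total 0 (φ d)
  · exact ⟨d, hne, hsupp, hd, hφ⟩
  · exact ⟨-d, neg_ne_zero.2 hne, by simpa using hsupp, by simp [hd], by simpa using hφ⟩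

theorem exists_integral_circulation {src dst : E → V} {l u : E → ℤ} {f : E → K}
    (hcirc : netOutflow src dst f = 0) (hbound : ∀ e, f e ∈ Set.Icc (l e : K) (u e))
    (φ : (E → K) →ₗ[K] K) :
    ∃ g : E → ℤ, netOutflow src dst (fun e => (g e : K)) = 0 ∧ (∀ e, g e ∈ Set.Icc (l e) (u e)) ∧
      φ f ≤ φ fun e => (g e : K) := by
  induction hF : fracSupport f using Finset.strongInduction generalizing f with
  | H F ih =>
    subst hF
    obtain hint | hfrac := (fracSupport f).eq_empty_or_nonempty
    · obtain ⟨g, rfl⟩ := fracSupport_eq_empty.1 hint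
      exact ⟨g, hcirc, by simpa using hbound, le_rfl⟩
    · obtain ⟨d, hne, hsupp, hd, hφ⟩ := exists_circulation_on_fracSupport hcirc hfrac φ
      obtain ⟨c, hc, hbound', hlt⟩ := exists_fracSupport_ssubset hbound hne hsupp
      obtain ⟨g, hg, hgbound, hφg⟩ := ih _ hlt (by simp [hcirc, hd]) hbound' rfl
      have hφf : φ f ≤ φ (f + c • d) := by simpa using mul_nonneg hc hφ
      exact ⟨g, hg, hgbound, hφf.trans hφg⟩

theorem flow_rounding_exists_general (src dst : E → V) (s t : V) (f : E → K)
    (hcons : ∀ v : V, v ≠ s → v ≠ t → netOutflow src dst f v = 0) :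
    ∃ g : E → K,
      (∀ e, g e = ⌊f e⌋ ∨ g e = ⌈f e⌉) ∧
      (∀ v : V, v ≠ s → v ≠ t → netOutflow src dst g v = 0) ∧
      netOutflow src dst f s ≤ netOutflow src dst g s := by
  let f' : Option E → K := fun o => o.elim (netOutflow src dst f s) f
  have hf' : netOutflow (fun o : Option E => o.elim t src) (fun o => o.elim s dst) f' = 0 :=
    netOutflow_returnEdge_eq_zero hcons
  obtain ⟨g, hg, hround, hvalue⟩ := exists_integral_circulation hf'
    (fun e => ⟨Int.floor_le (f' e), Int.le_ceil (f' e)⟩) (LinearMap.proj none)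
  let κ : K := 1 - if s = t then 1 else 0
  have hκ : 0 ≤ κ := by simp only [κ]; split_ifs <;> simp
  have value_eq {h : Option E → K}
      (hh : netOutflow (fun o : Option E => o.elim t src) (fun o => o.elim s dst) h = 0) :
      netOutflow src dst (fun e => h (some e)) s = h none * κ := by
    rw [netOutflow_eq_of_returnEdge hh, if_pos rfl]
  refine ⟨fun e => g (some e), fun e => ?_, fun v hvs hvt => ?_, ?_⟩
  · exact (eq_floor_or_eq_ceil (hround (some e))).imp (congrArg _) (congrArg _)
  · simpa [hvs, hvt] using netOutflow_eq_of_returnEdge hg v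
  · calc netOutflow src dst f s = f' none * κ := value_eq hf'
      _ ≤ g none * κ := mul_le_mul_of_nonneg_right hvalue hκ
      _ = netOutflow src dst (fun e => (g (some e) : K)) s := (value_eq hg).symm

end Rounding

/-- Cohen's flow rounding theorem (existence version): an `s`-`t` flow whose
values are nonnegative integer multiples of `Δ = 2^(-k)` can be rounded
edge-by-edge to `⌊f(e)⌋` or `⌈f(e)⌉` while remaining a flow and not decreasing
the flow value. -/
theorem flow_rounding_exists {V E : Type*} [Fintype V] [DecidableEq V] [Fintype E]
    (src dst : E → V) (s t : V) (hst : s ≠ t)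
    (k : ℕ) (Δ : ℝ) (hΔ : Δ = (2 : ℝ) ^ (-(k : ℤ)))
    (f : E → ℝ) (hf0 : ∀ e, 0 ≤ f e) (hint : ∀ e, ∃ z : ℤ, f e = z * Δ)
    (hcons : ∀ v : V, v ≠ s → v ≠ t →
      ∑ e ∈ univ.filter (fun e => src e = v), f e
        = ∑ e ∈ univ.filter (fun e => dst e = v), f e) :
    ∃ f' : E → ℝ,
      (∀ e, f' e = (⌊f e⌋ : ℝ) ∨ f' e = (⌈f e⌉ : ℝ)) ∧
      (∀ v : V, v ≠ s → v ≠ t →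
        ∑ e ∈ univ.filter (fun e => src e = v), f' e
          = ∑ e ∈ univ.filter (fun e => dst e = v), f' e) ∧
      ((∑ e ∈ univ.filter (fun e => src e = s), f e)
          - (∑ e ∈ univ.filter (fun e => dst e = s), f e)
        ≤ (∑ e ∈ univ.filter (fun e => src e = s), f' e)
          - (∑ e ∈ univ.filter (fun e => dst e = s), f' e)) := by
  simpa only [netOutflow_apply, sub_eq_zero] using flow_rounding_exists_general src dst s t f
    fun v hvs hvt => by simpa only [netOutflow_apply, sub_eq_zero] using hcons v hvs hvt
end

section
/- There exists a constant C > 0 such that for every positive integer n and every function d : Fin n → ℝ with d(i) > 0 for all i, there is a symmetric function w' : Fin n × Fin n → ℝ≥0 vanishing on the diagonal, with at most C·n unordered pairs {u,v} satisfying w'(u,v) > 0, such that (1/2)·L(w') ⪯ L(H(d)) ⪯ 2·L(w'), where H(d) is the complete graph on Fin n with weight d(u)·d(v) on each pair {u,v} with u ≠ v. -/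
/-!
The product structure of the weights plays no role: every weighted graph is sparsified by the
barrier argument of Batson, Spielman and Srivastava. On the range of the weighted incidence map,
a space of dimension at most `n`, the coordinate functionals expressed in an orthonormal basis
are vectors `v i` with `∑ i, v i (v i)ᵀ = 1`. To approximate within a factor `γ > 1` it is enough
to choose `O(n)` of them with weights `s i` so that the eigenvalues of `A = ∑ i, s i • v i (v i)ᵀ`
lie in an interval `[l, u]` with `0 < u ≤ γ² l`.

The choice is greedy. Start from `A = 0` with `l < 0 < u`, and keep the potentials `tr (u - A)⁻¹`
and `tr (A - l)⁻¹` bounded while each step moves `u` and `l` up by constants and adds one rank-one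
term to `A`. By the Sherman–Morrison formula, adding `t • v i (v i)ᵀ` is admissible as soon as
`t⁻¹` lies between an upper cost and a lower gain of `v i`. Because of `∑ i, v i (v i)ᵀ = 1` the
sums of these over `i` are traces, and comparing the traces yields an `i` whose cost is smaller
than its gain.
-/

open Matrix

/-- The Laplacian matrix of a weight function `w` on a finite vertex set `V`:
`L(w)_{uu} = ∑_x w(u,x)` and `L(w)_{uv} = -w(u,v)` for `u ≠ v`. -/
def graphLaplacian {V : Type*} [Fintype V] [DecidableEq V] (w : V → V → ℝ) :
    Matrix V V ℝ :=
  Matrix.of fun u v => if u = v then ∑ x, w u x else -(w u v)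

section RankOneUpdate

variable {κ K : Type*} [Fintype κ] [DecidableEq κ] [Field K] {A : Matrix κ κ K} {u v : κ → K}

theorem inv_add_vecMulVec (hA : IsUnit A) (huv : 1 + v ⬝ᵥ A⁻¹ *ᵥ u ≠ 0) :
    (A + vecMulVec u v)⁻¹ =
      A⁻¹ - (1 + v ⬝ᵥ A⁻¹ *ᵥ u)⁻¹ • vecMulVec (A⁻¹ *ᵥ u) (v ᵥ* A⁻¹) := by
  have hAA : A * A⁻¹ = 1 := mul_nonsing_inv _ ((isUnit_iff_isUnit_det _).1 hA)
  set c := v ⬝ᵥ A⁻¹ *ᵥ u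
  have hcancel : (1 + c)⁻¹ • (vecMulVec u (v ᵥ* A⁻¹) + c • vecMulVec u (v ᵥ* A⁻¹)) =
      vecMulVec u (v ᵥ* A⁻¹) := by
    rw [← one_smul K (vecMulVec u (v ᵥ* A⁻¹)), smul_smul, mul_one, ← add_smul,
      inv_smul_smul₀ huv, one_smul]
  refine inv_eq_right_inv ?_
  rw [mul_sub, add_mul, hAA, vecMulVec_mul, Matrix.mul_smul, add_mul, mul_vecMulVec, mulVec_mulVec,
    hAA, one_mulVec, vecMulVec_mul_vecMulVec, vecMulVec_smul, hcancel, add_sub_cancel_right]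

theorem trace_inv_add_vecMulVec (hA : IsUnit A) (huv : 1 + v ⬝ᵥ A⁻¹ *ᵥ u ≠ 0) :
    (A + vecMulVec u v)⁻¹.trace =
      A⁻¹.trace - (v ⬝ᵥ (A⁻¹ * A⁻¹) *ᵥ u) / (1 + v ⬝ᵥ A⁻¹ *ᵥ u) := by
  rw [inv_add_vecMulVec hA huv, trace_sub, trace_smul, trace_vecMulVec,
    dotProduct_comm (A⁻¹ *ᵥ u), ← dotProduct_mulVec, mulVec_mulVec, smul_eq_mul, inv_mul_eq_div]

end RankOneUpdate

section PosDef

theorem posSemidef_smul_vecMulVec_self {κ : Type*} [Finite κ] {t : ℝ} (ht : 0 ≤ t)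
    (v : κ → ℝ) :
    (t • vecMulVec v v).PosSemidef := by
  simpa only [star_trivial] using (posSemidef_vecMulVec_self_star v).smul ht

theorem posDef_add_smul_one {κ : Type*} [DecidableEq κ] {A : Matrix κ κ ℝ} (hA : A.PosDef)
    {δ : ℝ} (hδ : 0 ≤ δ) : (A + δ • 1).PosDef :=
  hA.add_posSemidef (PosSemidef.one.smul hδ)

theorem posSemidef_mul_mul_same {κ : Type*} [Fintype κ] {A B : Matrix κ κ ℝ}
    (hA : A.PosSemidef) (hB : B.IsHermitian) : (B * A * B).PosSemidef := by
  simpa only [hB.eq] using hA.mul_mul_conjTranspose_same B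

variable {κ : Type*} [Fintype κ] [DecidableEq κ] {A : Matrix κ κ ℝ} {δ t : ℝ} {v : κ → ℝ}

theorem sq_dotProduct_le (hA : A.PosDef) (v x : κ → ℝ) :
    (v ⬝ᵥ x) ^ 2 ≤ (v ⬝ᵥ A⁻¹ *ᵥ v) * (x ⬝ᵥ A *ᵥ x) := by
  rcases eq_or_ne v 0 with rfl | hv
  · simp
  have hs : 0 < v ⬝ᵥ A⁻¹ *ᵥ v := by simpa using hA.inv.dotProduct_mulVec_pos hv
  have hAp : A *ᵥ A⁻¹ *ᵥ v = v := by
    rw [mulVec_mulVec, mul_nonsing_inv _ ((isUnit_iff_isUnit_det _).1 hA.isUnit), one_mulVec]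
  have hpA : (A⁻¹ *ᵥ v) ⬝ᵥ A *ᵥ x = v ⬝ᵥ x := by
    rw [dotProduct_mulVec, ← mulVec_transpose, ← conjTranspose_eq_transpose_of_trivial,
      hA.isHermitian.eq, hAp]
  set p := A⁻¹ *ᵥ v
  set s := v ⬝ᵥ p
  have hexpand : (s • x - (v ⬝ᵥ x) • p) ⬝ᵥ A *ᵥ (s • x - (v ⬝ᵥ x) • p) =
      s * (s * (x ⬝ᵥ A *ᵥ x) - (v ⬝ᵥ x) ^ 2) := by
    simp only [mulVec_sub, mulVec_smul, hAp, sub_dotProduct, dotProduct_sub, smul_dotProduct,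
      dotProduct_smul, hpA, smul_eq_mul, dotProduct_comm x v, dotProduct_comm p v]
    ring
  have hnonneg : 0 ≤ s * (s * (x ⬝ᵥ A *ᵥ x) - (v ⬝ᵥ x) ^ 2) := by
    simpa only [← hexpand, star_trivial] using
      hA.posSemidef.dotProduct_mulVec_nonneg (s • x - (v ⬝ᵥ x) • p)
  exact sub_nonneg.1 (nonneg_of_mul_nonneg_right hnonneg hs)

theorem posDef_sub_smul_vecMulVec (hA : A.PosDef) (ht : 0 ≤ t)
    (hv : t * (v ⬝ᵥ A⁻¹ *ᵥ v) < 1) : (A - t • vecMulVec v v).PosDef := by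
  refine PosDef.of_dotProduct_mulVec_pos
    (hA.isHermitian.sub (posSemidef_smul_vecMulVec_self ht v).isHermitian) fun x hx => ?_
  have hxA : 0 < x ⬝ᵥ A *ᵥ x := by simpa using hA.dotProduct_mulVec_pos hx
  calc 0 < (1 - t * (v ⬝ᵥ A⁻¹ *ᵥ v)) * (x ⬝ᵥ A *ᵥ x) := mul_pos (sub_pos.2 hv) hxA
    _ ≤ x ⬝ᵥ A *ᵥ x - t * (v ⬝ᵥ x) ^ 2 := by
      linarith [mul_le_mul_of_nonneg_left (sq_dotProduct_le hA v x) ht]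
    _ = star x ⬝ᵥ (A - t • vecMulVec v v) *ᵥ x := by
      simp [sub_mulVec, smul_mulVec, vecMulVec_mulVec, dotProduct_comm x v, sq]

theorem posSemidef_trace_smul_one_sub (hA : A.PosSemidef) : (A.trace • 1 - A).PosSemidef := by
  open scoped MatrixOrder in
  rw [← Matrix.le_iff, ← Algebra.algebraMap_eq_smul_one,
    le_algebraMap_iff_spectrum_le hA.isHermitian, hA.isHermitian.spectrum_real_eq_range_eigenvalues]
  rintro _ ⟨j, rfl⟩
  rw [hA.isHermitian.trace_eq_sum_eigenvalues]
  exact Finset.single_le_sum (f := hA.isHermitian.eigenvalues)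
    (fun i _ => hA.eigenvalues_nonneg i) (Finset.mem_univ j)

theorem posDef_sub_smul_one (hA : A.PosDef) (hδ : 0 < δ) (htr : δ * A⁻¹.trace < 1) :
    (A - δ • 1).PosDef := by
  have hAA : A * A⁻¹ = 1 := mul_nonsing_inv _ ((isUnit_iff_isUnit_det _).1 hA.isUnit)
  have hinv : (1 - δ • A⁻¹).PosDef := by
    convert (PosDef.one.smul (sub_pos.2 htr)).add_posSemidef
      ((posSemidef_trace_smul_one_sub hA.inv.posSemidef).smul hδ.le) using 1
    module
  have hconj : ((A - δ • 1) * A⁻¹ * (A - δ • 1)).PosSemidef :=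
    posSemidef_mul_mul_same hA.inv.posSemidef
      (hA.isHermitian.sub (isHermitian_one.smul (.all δ)))
  -- `A - δ = δ (1 - δ A⁻¹) + (A - δ) A⁻¹ (A - δ)`
  convert (hinv.smul hδ).add_posSemidef hconj using 1
  simp only [sub_mul, mul_sub, hAA, mul_eq_one_comm.1 hAA, Matrix.smul_mul, Matrix.mul_smul,
    Matrix.one_mul, Matrix.mul_one]
  module

end PosDef

section ResolventTrace

variable {κ : Type*} [Fintype κ] [DecidableEq κ] {A : Matrix κ κ ℝ} {δ : ℝ}

theorem inv_sub_inv_add_smul_one (hA : A.PosDef) (hδ : 0 ≤ δ) :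
    A⁻¹ - (A + δ • 1)⁻¹ = δ • (A⁻¹ * (A + δ • 1)⁻¹) := by
  rw [Matrix.inv_sub_inv (iff_of_true hA.isUnit (posDef_add_smul_one hA hδ).isUnit),
    add_sub_cancel_left, Matrix.mul_smul, Matrix.mul_one, Matrix.smul_mul]

theorem trace_inv_sub_trace_inv_add_smul_one (hA : A.PosDef) (hδ : 0 ≤ δ) :
    A⁻¹.trace - (A + δ • 1)⁻¹.trace = δ * (A⁻¹ * (A + δ • 1)⁻¹).trace := by
  rw [← trace_sub, inv_sub_inv_add_smul_one hA hδ, trace_smul, smul_eq_mul]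

theorem smul_trace_inv_add_smul_one_sq_le (hA : A.PosDef) (hδ : 0 ≤ δ) :
    δ * ((A + δ • 1)⁻¹ * (A + δ • 1)⁻¹).trace ≤ A⁻¹.trace - (A + δ • 1)⁻¹.trace := by
  have hZ : (A + δ • 1)⁻¹.IsHermitian := (posDef_add_smul_one hA hδ).inv.isHermitian
  have hres := inv_sub_inv_add_smul_one hA hδ
  rw [trace_inv_sub_trace_inv_add_smul_one hA hδ]
  set Z := (A + δ • 1)⁻¹
  have hZXZ : 0 ≤ (Z * A⁻¹ * Z).trace :=
    (posSemidef_mul_mul_same hA.inv.posSemidef hZ).trace_nonneg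
  refine mul_le_mul_of_nonneg_left (sub_nonneg.1 ?_) hδ
  calc 0 ≤ δ * (Z * A⁻¹ * Z).trace := mul_nonneg hδ hZXZ
    _ = (A⁻¹ * Z).trace - (Z * Z).trace := by
      rw [← trace_sub, ← sub_mul, hres, Matrix.smul_mul, trace_smul, smul_eq_mul,
        trace_mul_cycle A⁻¹]

theorem trace_inv_add_smul_one_lt [Nonempty κ] (hA : A.PosDef) (hδ : 0 < δ) :
    (A + δ • 1)⁻¹.trace < A⁻¹.trace := by
  have hZ := (posDef_add_smul_one hA hδ.le).inv
  have hsq : ((A + δ • 1)⁻¹ * (A + δ • 1)⁻¹).PosDef := by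
    simpa only [hZ.isHermitian.eq] using
      PosDef.conjTranspose_mul_self _ (mulVec_injective_of_isUnit hZ.isUnit)
  exact sub_pos.1 ((mul_pos hδ hsq.trace_pos).trans_le
    (smul_trace_inv_add_smul_one_sq_le hA hδ.le))

theorem trace_inv_sub_mul_le_trace_inv_sq (hA : A.PosDef) (hδ : 0 < δ)
    (htr : δ * (A + δ • 1)⁻¹.trace ≤ 1) :
    (A⁻¹.trace - (A + δ • 1)⁻¹.trace) * (δ⁻¹ + (A⁻¹.trace - (A + δ • 1)⁻¹.trace)) ≤
      (A⁻¹ * A⁻¹).trace := by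
  have hZ := (posDef_add_smul_one hA hδ.le).inv.posSemidef
  have hD := trace_inv_sub_trace_inv_add_smul_one hA hδ.le
  have hres := inv_sub_inv_add_smul_one hA hδ.le
  set D := A⁻¹.trace - (A + δ • 1)⁻¹.trace
  set Z := (A + δ • 1)⁻¹
  have hsq : (A⁻¹ * A⁻¹).trace = (A⁻¹ * Z).trace + δ * (A⁻¹ * Z * A⁻¹).trace := by
    rw [← sub_eq_iff_eq_add', ← trace_sub, ← mul_sub, hres, Matrix.mul_smul, trace_smul,
      smul_eq_mul, ← Matrix.mul_assoc, ← trace_mul_cycle]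
  have hconj : 0 ≤ ((A⁻¹ - D • 1) * Z * (A⁻¹ - D • 1)).trace :=
    (posSemidef_mul_mul_same hZ
      (hA.inv.isHermitian.sub (isHermitian_one.smul (.all D)))).trace_nonneg
  have hexpand : ((A⁻¹ - D • 1) * Z * (A⁻¹ - D • 1)).trace =
      (A⁻¹ * Z * A⁻¹).trace - 2 * D * (A⁻¹ * Z).trace + D ^ 2 * Z.trace := by
    simp only [sub_mul, mul_sub, Matrix.smul_mul, Matrix.mul_smul, Matrix.one_mul, Matrix.mul_one,
      trace_sub, trace_smul, smul_eq_mul, trace_mul_comm Z A⁻¹]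
    ring
  have hDD : D ^ 2 ≤ δ * (A⁻¹ * Z * A⁻¹).trace := by
    linarith [mul_nonneg hδ.le (hexpand ▸ hconj), mul_le_mul_of_nonneg_left htr (sq_nonneg D),
      congrArg (2 * D * ·) hD]
  calc D * (δ⁻¹ + D) = δ⁻¹ * D + D ^ 2 := by ring
    _ = (A⁻¹ * Z).trace + D ^ 2 := by rw [hD, inv_mul_cancel_left₀ hδ.ne']
    _ ≤ (A⁻¹ * A⁻¹).trace := by linarith

end ResolventTrace

section BarrierStep

variable {ι κ : Type*} [Fintype ι] [Fintype κ] [DecidableEq κ] {A : Matrix κ κ ℝ}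
  {D t ε δ : ℝ} {v : κ → ℝ}

theorem trace_inv_sub_smul_vecMulVec_le (hA : A.PosDef) (hD : 0 < D) (ht : 0 < t)
    (hv : (v ⬝ᵥ (A⁻¹ * A⁻¹) *ᵥ v) / D + v ⬝ᵥ A⁻¹ *ᵥ v ≤ t⁻¹)
    (htv : t * (v ⬝ᵥ A⁻¹ *ᵥ v) < 1) :
    (A - t • vecMulVec v v)⁻¹.trace ≤ A⁻¹.trace + D := by
  have hdenom : 1 + v ⬝ᵥ A⁻¹ *ᵥ (-t • v) = 1 - t * (v ⬝ᵥ A⁻¹ *ᵥ v) := by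
    rw [mulVec_smul, dotProduct_smul, smul_eq_mul, neg_mul, sub_eq_add_neg]
  have hpos : 0 < 1 - t * (v ⬝ᵥ A⁻¹ *ᵥ v) := sub_pos.2 htv
  have hbound : t * (v ⬝ᵥ (A⁻¹ * A⁻¹) *ᵥ v) ≤ D * (1 - t * (v ⬝ᵥ A⁻¹ *ᵥ v)) := by
    have := mul_le_mul_of_nonneg_left hv (mul_pos hD ht).le
    field_simp at this
    linarith
  rw [sub_eq_add_neg, ← neg_smul, ← smul_vecMulVec,
    trace_inv_add_vecMulVec hA.isUnit (hdenom ▸ hpos.ne'), hdenom, mulVec_smul, dotProduct_smul,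
    smul_eq_mul, neg_mul, neg_div, sub_neg_eq_add]
  gcongr
  exact (div_le_iff₀ hpos).2 hbound

theorem trace_inv_add_smul_vecMulVec_le (hA : A.PosDef) (hD : 0 < D) (ht : 0 < t)
    (hv : t⁻¹ ≤ (v ⬝ᵥ (A⁻¹ * A⁻¹) *ᵥ v) / D - v ⬝ᵥ A⁻¹ *ᵥ v) :
    (A + t • vecMulVec v v)⁻¹.trace ≤ A⁻¹.trace - D := by
  have hdenom : 1 + v ⬝ᵥ A⁻¹ *ᵥ (t • v) = 1 + t * (v ⬝ᵥ A⁻¹ *ᵥ v) := by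
    rw [mulVec_smul, dotProduct_smul, smul_eq_mul]
  have hvv : 0 ≤ v ⬝ᵥ A⁻¹ *ᵥ v := by
    simpa only [star_trivial] using hA.inv.posSemidef.dotProduct_mulVec_nonneg v
  have hpos : 0 < 1 + t * (v ⬝ᵥ A⁻¹ *ᵥ v) := by positivity
  have hbound : D * (1 + t * (v ⬝ᵥ A⁻¹ *ᵥ v)) ≤ t * (v ⬝ᵥ (A⁻¹ * A⁻¹) *ᵥ v) := by
    have := mul_le_mul_of_nonneg_left hv (mul_pos hD ht).le
    field_simp at this
    linarith
  rw [← smul_vecMulVec, trace_inv_add_vecMulVec hA.isUnit (hdenom ▸ hpos.ne'), hdenom,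
    mulVec_smul, dotProduct_smul, smul_eq_mul]
  gcongr
  exact (le_div_iff₀ hpos).2 hbound

/-- One barrier condition of the Batson–Spielman–Srivastava argument: `M` is positive definite with
potential `tr M⁻¹` at most `ε`. It is imposed on `u • 1 - A` for the upper barrier `u` and on
`A - l • 1` for the lower barrier `l`, where `A` is the matrix built so far. -/
structure BarrierBound (ε : ℝ) (M : Matrix κ κ ℝ) : Prop where
  posDef : M.PosDef
  trace_inv_le : M⁻¹.trace ≤ ε

theorem barrierBound_smul_one (hε : 0 < ε) [Nonempty κ] :
    BarrierBound ε ((Fintype.card κ / ε) • (1 : Matrix κ κ ℝ)) where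
  posDef := PosDef.one.smul (by positivity)
  trace_inv_le := by
    have hinv : ((Fintype.card κ / ε) • (1 : Matrix κ κ ℝ))⁻¹ = (ε / Fintype.card κ) • 1 := by
      refine inv_eq_right_inv ?_
      rw [Matrix.smul_mul, Matrix.one_mul, smul_smul, div_mul_div_comm, mul_comm, div_self,
        one_smul]
      positivity
    rw [hinv, trace_smul, trace_one, smul_eq_mul, div_mul_cancel₀]
    positivity

theorem sum_dotProduct_mulVec_eq_trace {v : ι → κ → ℝ} (hv : ∑ i, vecMulVec (v i) (v i) = 1)
    (Q : Matrix κ κ ℝ) : ∑ i, v i ⬝ᵥ Q *ᵥ v i = Q.trace := by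
  calc ∑ i, v i ⬝ᵥ Q *ᵥ v i = (Q * ∑ i, vecMulVec (v i) (v i)).trace := by
        simp only [Matrix.mul_sum, trace_sum, mul_vecMulVec, trace_vecMulVec, dotProduct_comm]
    _ = Q.trace := by rw [hv, Matrix.mul_one]

/-- The reciprocal of the largest step `t` for which `M + δ • 1 - t • vecMulVec v v` stays
within the potential of `M`; in the notation of Batson, Spielman and Srivastava this is `U_A(v)`. -/
noncomputable def upperCost (δ : ℝ) (M : Matrix κ κ ℝ) (v : κ → ℝ) : ℝ :=
  (v ⬝ᵥ ((M + δ • 1)⁻¹ * (M + δ • 1)⁻¹) *ᵥ v) / (M⁻¹.trace - (M + δ • 1)⁻¹.trace) +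
    v ⬝ᵥ (M + δ • 1)⁻¹ *ᵥ v

/-- The reciprocal of the smallest step `t` for which `M - δ • 1 + t • vecMulVec v v` stays within
the potential of `M`; in the notation of Batson, Spielman and Srivastava this is `L_A(v)`. -/
noncomputable def lowerGain (δ : ℝ) (M : Matrix κ κ ℝ) (v : κ → ℝ) : ℝ :=
  (v ⬝ᵥ ((M - δ • 1)⁻¹ * (M - δ • 1)⁻¹) *ᵥ v) / ((M - δ • 1)⁻¹.trace - M⁻¹.trace) -
    v ⬝ᵥ (M - δ • 1)⁻¹ *ᵥ v

theorem BarrierBound.nonneg {M : Matrix κ κ ℝ} (hM : BarrierBound ε M) : 0 ≤ ε :=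
  hM.posDef.inv.posSemidef.trace_nonneg.trans hM.trace_inv_le

theorem dotProduct_inv_add_mulVec_le_upperCost [Nonempty κ] (hA : A.PosDef) (hδ : 0 < δ) :
    v ⬝ᵥ (A + δ • 1)⁻¹ *ᵥ v ≤ upperCost δ A v := by
  have hZ := (posDef_add_smul_one hA hδ.le).inv.isHermitian
  refine le_add_of_nonneg_left (div_nonneg ?_ (sub_pos.2 (trace_inv_add_smul_one_lt hA hδ)).le)
  simpa only [star_trivial, Matrix.mul_one] using
    (posSemidef_mul_mul_same .one hZ).dotProduct_mulVec_nonneg v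

theorem upperCost_nonneg [Nonempty κ] (hA : A.PosDef) (hδ : 0 < δ) : 0 ≤ upperCost δ A v := by
  refine le_trans ?_ (dotProduct_inv_add_mulVec_le_upperCost hA hδ)
  simpa only [star_trivial] using
    (posDef_add_smul_one hA hδ.le).inv.posSemidef.dotProduct_mulVec_nonneg v

theorem BarrierBound.add_smul_one_sub [Nonempty κ] (hA : BarrierBound ε A) (hδ : 0 < δ)
    (ht : 0 < t) (htv : upperCost δ A v < t⁻¹) :
    BarrierBound ε (A + δ • 1 - t • vecMulVec v v) := by
  have hD := sub_pos.2 (trace_inv_add_smul_one_lt hA.posDef hδ)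
  have hA' := posDef_add_smul_one hA.posDef hδ.le
  have hroom : t * (v ⬝ᵥ (A + δ • 1)⁻¹ *ᵥ v) < 1 :=
    (lt_inv_mul_iff₀ ht).1 <| by
      simpa only [mul_one] using
        (dotProduct_inv_add_mulVec_le_upperCost hA.posDef hδ).trans_lt htv
  refine ⟨posDef_sub_smul_vecMulVec hA' ht.le hroom, ?_⟩
  calc (A + δ • 1 - t • vecMulVec v v)⁻¹.trace
      ≤ (A + δ • 1)⁻¹.trace + (A⁻¹.trace - (A + δ • 1)⁻¹.trace) :=
        trace_inv_sub_smul_vecMulVec_le hA' hD ht htv.le hroom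
    _ ≤ ε := by rw [add_sub_cancel]; exact hA.trace_inv_le

theorem BarrierBound.posDef_sub_smul_one (hA : BarrierBound ε A) (hδ : 0 < δ) (hε : δ * ε < 1) :
    (A - δ • 1).PosDef :=
  _root_.posDef_sub_smul_one hA.posDef hδ
    ((mul_le_mul_of_nonneg_left hA.trace_inv_le hδ.le).trans_lt hε)

theorem trace_inv_lt_trace_inv_sub_smul_one [Nonempty κ] (hA : (A - δ • 1).PosDef) (hδ : 0 < δ) :
    A⁻¹.trace < (A - δ • 1)⁻¹.trace := by
  simpa only [sub_add_cancel] using trace_inv_add_smul_one_lt hA hδ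

theorem BarrierBound.sub_smul_one_add [Nonempty κ] (hA : BarrierBound ε A) (hδ : 0 < δ)
    (hε : δ * ε < 1) (ht : 0 < t) (htv : t⁻¹ ≤ lowerGain δ A v) :
    BarrierBound ε (A - δ • 1 + t • vecMulVec v v) := by
  have hA' := hA.posDef_sub_smul_one hδ hε
  have hD := sub_pos.2 (trace_inv_lt_trace_inv_sub_smul_one hA' hδ)
  refine ⟨hA'.add_posSemidef (posSemidef_smul_vecMulVec_self ht.le v), ?_⟩
  calc (A - δ • 1 + t • vecMulVec v v)⁻¹.trace
      ≤ (A - δ • 1)⁻¹.trace - ((A - δ • 1)⁻¹.trace - A⁻¹.trace) :=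
        trace_inv_add_smul_vecMulVec_le hA' hD ht htv
    _ ≤ ε := by rw [sub_sub_cancel]; exact hA.trace_inv_le

section Isotropic

variable [Nonempty κ] {v : ι → κ → ℝ} (hv : ∑ i, vecMulVec (v i) (v i) = 1)

include hv

theorem sum_upperCost_le (hA : BarrierBound ε A) (hδ : 0 < δ) :
    ∑ i, upperCost δ A (v i) ≤ δ⁻¹ + ε := by
  have htrace := trace_inv_add_smul_one_lt hA.posDef hδ
  simp only [upperCost, Finset.sum_add_distrib, ← Finset.sum_div,
    sum_dotProduct_mulVec_eq_trace hv]
  refine add_le_add ?_ (htrace.le.trans hA.trace_inv_le)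
  rw [div_le_iff₀ (sub_pos.2 htrace), le_inv_mul_iff₀ hδ]
  exact smul_trace_inv_add_smul_one_sq_le hA.posDef hδ.le

theorem le_sum_lowerGain (hA : BarrierBound ε A) (hδ : 0 < δ) (hε : δ * ε < 1) :
    δ⁻¹ - ε ≤ ∑ i, lowerGain δ A (v i) := by
  have hA' := hA.posDef_sub_smul_one hδ hε
  have hD := sub_pos.2 (trace_inv_lt_trace_inv_sub_smul_one hA' hδ)
  have hsq := trace_inv_sub_mul_le_trace_inv_sq hA' hδ
    (by simpa only [sub_add_cancel] using
      (mul_le_mul_of_nonneg_left hA.trace_inv_le hδ.le).trans hε.le)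
  rw [sub_add_cancel, mul_comm, ← le_div_iff₀ hD] at hsq
  simp only [lowerGain, Finset.sum_sub_distrib, ← Finset.sum_div,
    sum_dotProduct_mulVec_eq_trace hv]
  linarith [hA.trace_inv_le]

theorem exists_barrier_step {εU εL δU δL : ℝ} (hδU : 0 < δU)
    (hδε : δU⁻¹ + εU < δL⁻¹ - εL) {U L : Matrix κ κ ℝ} (hU : BarrierBound εU U)
    (hL : BarrierBound εL L) :
    ∃ i, ∃ t : ℝ, 0 < t ∧ BarrierBound εU (U + δU • 1 - t • vecMulVec (v i) (v i)) ∧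
      BarrierBound εL (L - δL • 1 + t • vecMulVec (v i) (v i)) := by
  have hεL : εL < δL⁻¹ := by linarith [inv_pos.2 hδU, hU.nonneg]
  have hδL : 0 < δL := inv_pos.1 (hL.nonneg.trans_lt hεL)
  replace hεL : δL * εL < 1 := by rwa [← lt_inv_mul_iff₀ hδL, mul_one]
  obtain ⟨i, -, hi⟩ : ∃ i ∈ Finset.univ, upperCost δU U (v i) < lowerGain δL L (v i) :=
    Finset.exists_lt_of_sum_lt <|
      ((sum_upperCost_le hv hU hδU).trans_lt hδε).trans_le (le_sum_lowerGain hv hL hδL hεL)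
  have ht : 0 < (lowerGain δL L (v i))⁻¹ :=
    inv_pos.2 ((upperCost_nonneg hU.posDef hδU).trans_lt hi)
  exact ⟨i, (lowerGain δL L (v i))⁻¹, ht, hU.add_smul_one_sub hδU ht (by rwa [inv_inv]),
    hL.sub_smul_one_add hδL hεL ht (by rw [inv_inv])⟩

end Isotropic

end BarrierStep

section IsotropicWeights

variable {ι κ : Type*} [Fintype ι] [Fintype κ] [DecidableEq κ] {v : ι → κ → ℝ}

theorem ncard_support_add_single_le {ι : Type*} [Finite ι] [DecidableEq ι] (s : ι → ℝ) (i : ι)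
    (t : ℝ) : (Function.support (s + Pi.single i t)).ncard ≤ (Function.support s).ncard + 1 := by
  have hsub : Function.support (s + Pi.single i t) ⊆ insert i (Function.support s) := by
    intro j hj
    rcases eq_or_ne j i with rfl | hji
    · exact Set.mem_insert _ _
    · simpa [hji] using hj
  exact (Set.ncard_le_ncard hsub).trans (Set.ncard_insert_le _ _)

theorem sum_add_single_smul [DecidableEq ι] {M : Type*} [AddCommMonoid M] [Module ℝ M]
    (s : ι → ℝ) (i : ι) (t : ℝ) (x : ι → M) :
    ∑ j, (s + Pi.single i t : ι → ℝ) j • x j = ∑ j, s j • x j + t • x i := by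
  simp [add_smul, Finset.sum_add_distrib, Pi.single_apply, ite_smul]

theorem exists_barrier_weights [Nonempty κ] (hv : ∑ i, vecMulVec (v i) (v i) = 1)
    {εU εL δU δL : ℝ} (hεU : 0 < εU) (hεL : 0 < εL) (hδU : 0 < δU)
    (hδε : δU⁻¹ + εU < δL⁻¹ - εL) (k : ℕ) :
    ∃ s : ι → ℝ, 0 ≤ s ∧ (Function.support s).ncard ≤ k ∧
      BarrierBound εU ((Fintype.card κ / εU + k * δU) • 1 - ∑ i, s i • vecMulVec (v i) (v i)) ∧
      BarrierBound εL (∑ i, s i • vecMulVec (v i) (v i) - (k * δL - Fintype.card κ / εL) • 1) := by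
  classical
  induction k with
  | zero =>
    refine ⟨0, le_rfl, by simp, ?_, ?_⟩
    · simpa using barrierBound_smul_one (κ := κ) hεU
    · simpa using barrierBound_smul_one (κ := κ) hεL
  | succ k ih =>
    obtain ⟨s, hs, hcard, hU, hL⟩ := ih
    obtain ⟨i, t, ht, hU', hL'⟩ := exists_barrier_step hv hδU hδε hU hL
    have hsum := sum_add_single_smul s i t fun j => vecMulVec (v j) (v j)
    refine ⟨s + Pi.single i t, ?_, ?_, ?_, ?_⟩
    · exact add_nonneg hs (Pi.single_nonneg.2 ht.le)
    · exact (ncard_support_add_single_le s i t).trans (Nat.add_le_add_right hcard 1)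
    · convert hU' using 1
      rw [hsum, Nat.cast_succ]
      module
    · convert hL' using 1
      rw [hsum, Nat.cast_succ]
      module

omit [DecidableEq κ] in
theorem dotProduct_sum_smul_vecMulVec_mulVec (s : ι → ℝ) (v : ι → κ → ℝ) (x : κ → ℝ) :
    x ⬝ᵥ (∑ i, s i • vecMulVec (v i) (v i)) *ᵥ x = ∑ i, s i * (v i ⬝ᵥ x) ^ 2 := by
  simp [sum_mulVec, sum_dotProduct, smul_mulVec, vecMulVec_mulVec, dotProduct_comm x, sq]

theorem exists_barrier_parameters {γ : ℝ} (hγ : 1 < γ) :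
    ∃ ε > 0, ∃ m : ℕ, γ⁻¹ + ε < 1 - ε ∧ ε⁻¹ + m * γ ≤ γ ^ 2 * (m - ε⁻¹) := by
  have hγ' : γ⁻¹ < 1 := inv_lt_one_of_one_lt₀ hγ
  set ε := (1 - γ⁻¹) / 3 with hε
  have hgap : 0 < γ * (γ - 1) := mul_pos (by linarith) (by linarith)
  obtain ⟨m, hm⟩ := exists_nat_ge ((1 + γ ^ 2) * ε⁻¹ / (γ * (γ - 1)))
  rw [div_le_iff₀ hgap] at hm
  exact ⟨ε, by linarith, m, by linarith, by linarith⟩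

theorem exists_weights_between_barriers (hv : ∑ i, vecMulVec (v i) (v i) = 1) {ε δ : ℝ}
    (hε : 0 < ε) (hδ : 0 < δ) (hδε : δ⁻¹ + ε < 1 - ε) (m : ℕ) :
    ∃ s : ι → ℝ, 0 ≤ s ∧ (Function.support s).ncard ≤ m * Fintype.card κ ∧ ∀ x : κ → ℝ,
      Fintype.card κ * (m - ε⁻¹) * (x ⬝ᵥ x) ≤ ∑ i, s i * (v i ⬝ᵥ x) ^ 2 ∧
        ∑ i, s i * (v i ⬝ᵥ x) ^ 2 ≤ Fintype.card κ * (ε⁻¹ + m * δ) * (x ⬝ᵥ x) := by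
  rcases isEmpty_or_nonempty κ with _ | _
  · exact ⟨0, le_rfl, by simp, fun x => by simp⟩
  obtain ⟨s, hs, hcard, hU, hL⟩ := exists_barrier_weights hv hε hε hδ (δL := 1)
    (by rwa [inv_one]) (m * Fintype.card κ)
  refine ⟨s, hs, hcard, fun x => ⟨?_, ?_⟩⟩
  · have := hL.posDef.posSemidef.dotProduct_mulVec_nonneg x
    simp only [star_trivial, sub_mulVec, dotProduct_sub, smul_mulVec, dotProduct_smul, one_mulVec,
      dotProduct_sum_smul_vecMulVec_mulVec, smul_eq_mul, Nat.cast_mul, sub_nonneg] at this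
    exact (by ring : _ = _).trans_le this
  · have := hU.posDef.posSemidef.dotProduct_mulVec_nonneg x
    simp only [star_trivial, sub_mulVec, dotProduct_sub, smul_mulVec, dotProduct_smul, one_mulVec,
      dotProduct_sum_smul_vecMulVec_mulVec, smul_eq_mul, Nat.cast_mul, sub_nonneg] at this
    exact this.trans_eq (by ring)

theorem exists_sparse_weights_of_isotropic {γ : ℝ} (hγ : 1 < γ) :
    ∃ C : ℕ, ∀ {ι κ : Type*} [Fintype ι] [Fintype κ] [DecidableEq κ] {v : ι → κ → ℝ},
      ∑ i, vecMulVec (v i) (v i) = 1 →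
      ∃ s : ι → ℝ, 0 ≤ s ∧ (Function.support s).ncard ≤ C * Fintype.card κ ∧
        ∀ x : κ → ℝ, ∑ i, s i * (v i ⬝ᵥ x) ^ 2 ≤ γ * (x ⬝ᵥ x) ∧
          x ⬝ᵥ x ≤ γ * ∑ i, s i * (v i ⬝ᵥ x) ^ 2 := by
  have hγ₀ : 0 < γ := zero_lt_one.trans hγ
  obtain ⟨ε, hε, m, hδε, hm⟩ := exists_barrier_parameters hγ
  refine ⟨m, fun {ι κ} _ _ _ v hv => ?_⟩
  rcases isEmpty_or_nonempty κ with _ | _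
  · exact ⟨0, le_rfl, by simp, fun x => by simp⟩
  obtain ⟨s, hs, hcard, hform⟩ := exists_weights_between_barriers hv hε hγ₀ hδε m
  set u : ℝ := Fintype.card κ * (ε⁻¹ + m * γ)
  have hu : 0 < u := by positivity
  have hratio : u ≤ γ ^ 2 * (Fintype.card κ * (m - ε⁻¹)) := by
    rw [mul_left_comm]
    exact mul_le_mul_of_nonneg_left hm (Nat.cast_nonneg _)
  refine ⟨(γ / u) • s, smul_nonneg (by positivity) hs,
    (Set.ncard_le_ncard (Function.support_const_smul_subset _ _)).trans hcard, fun x => ?_⟩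
  simp only [Pi.smul_apply, smul_eq_mul, mul_assoc, ← Finset.mul_sum]
  obtain ⟨hlower, hupper⟩ := hform x
  set q := ∑ i, s i * (v i ⬝ᵥ x) ^ 2
  constructor
  · rw [div_mul_eq_mul_div, div_le_iff₀ hu, mul_assoc, mul_comm _ u]
    gcongr
  · have hx : 0 ≤ x ⬝ᵥ x := by simpa using dotProduct_star_self_nonneg x
    rw [div_mul_eq_mul_div, mul_div_assoc', le_div_iff₀ hu]
    calc (x ⬝ᵥ x) * u ≤ (x ⬝ᵥ x) * (γ ^ 2 * (Fintype.card κ * (m - ε⁻¹))) := by gcongr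
      _ = γ ^ 2 * (Fintype.card κ * (m - ε⁻¹) * (x ⬝ᵥ x)) := by ring
      _ ≤ γ ^ 2 * q := by gcongr
      _ = γ * (γ * q) := by ring

end IsotropicWeights

section Subspace

variable {ι : Type*} [Fintype ι]

theorem sum_vecMulVec_orthonormal {κ : Type*} [DecidableEq κ]
    {e : κ → EuclideanSpace ℝ ι} (he : Orthonormal ℝ e) :
    ∑ i, vecMulVec (fun k => e k i) (fun k => e k i) = 1 := by
  ext j k
  simpa [Matrix.sum_apply, vecMulVec_apply, PiLp.inner_apply, one_apply, mul_comm] using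
    orthonormal_iff_ite.1 he j k

theorem exists_sparse_weights_of_submodule {γ : ℝ} (hγ : 1 < γ) :
    ∃ C : ℕ, ∀ {ι : Type*} [Fintype ι] (R : Submodule ℝ (EuclideanSpace ℝ ι)),
      ∃ s : ι → ℝ, 0 ≤ s ∧ (Function.support s).ncard ≤ C * Module.finrank ℝ R ∧
        ∀ y ∈ R, ∑ i, s i * y i ^ 2 ≤ γ * ∑ i, y i ^ 2 ∧
          ∑ i, y i ^ 2 ≤ γ * ∑ i, s i * y i ^ 2 := by
  obtain ⟨C, hC⟩ := exists_sparse_weights_of_isotropic hγ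
  refine ⟨C, fun {ι} _ R => ?_⟩
  let e := stdOrthonormalBasis ℝ R
  let v (i : ι) (k : Fin (Module.finrank ℝ R)) : ℝ := (e k : EuclideanSpace ℝ ι) i
  have hv : ∑ i, vecMulVec (v i) (v i) = 1 :=
    sum_vecMulVec_orthonormal (e.orthonormal.comp_linearIsometry R.subtypeₗᵢ)
  obtain ⟨s, hs, hcard, hform⟩ := hC hv
  refine ⟨s, hs, by simpa only [Fintype.card_fin] using hcard, fun y hy => ?_⟩
  set c := e.repr ⟨y, hy⟩ with hc
  have hcoord (i : ι) : v i ⬝ᵥ c = y i := by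
    have := congrArg (fun z : R => (z : EuclideanSpace ℝ ι) i) (e.sum_repr ⟨y, hy⟩)
    simpa [v, hc, dotProduct, mul_comm] using this
  have hnorm : c ⬝ᵥ c = ∑ i, y i ^ 2 := by
    simpa [hv, hcoord] using dotProduct_sum_smul_vecMulVec_mulVec 1 v c
  simpa only [hnorm, hcoord] using hform c

end Subspace

section Graph

variable {V : Type*} {w : V → V → ℝ}

/-- The graph obtained from `w` by scaling the ordered pair `(u, v)` by `s (u, v)` and averaging the
two orientations of each edge. -/
noncomputable def reweight (s : V × V → ℝ) (w : V → V → ℝ) (u v : V) : ℝ :=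
  (s (u, v) + s (v, u)) / 2 * w u v

theorem reweight_comm (hw : ∀ u v, w u v = w v u) (s : V × V → ℝ) (u v : V) :
    reweight s w u v = reweight s w v u := by
  rw [reweight, reweight, hw, add_comm]

theorem reweight_self (hw₀ : ∀ u, w u u = 0) (s : V × V → ℝ) (u : V) : reweight s w u u = 0 := by
  rw [reweight, hw₀, mul_zero]

theorem ncard_edges_reweight_le [Finite V] (s : V × V → ℝ) (w : V → V → ℝ) :
    {p : Sym2 V | ∃ u v, p = s(u, v) ∧ 0 < reweight s w u v}.ncard ≤
      (Function.support s).ncard := by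
  have hsub : {p : Sym2 V | ∃ u v, p = s(u, v) ∧ 0 < reweight s w u v} ⊆
      (fun p : V × V => s(p.1, p.2)) '' Function.support s := by
    rintro _ ⟨u, v, rfl, huv⟩
    by_cases hs : s (u, v) = 0
    · refine ⟨(v, u), fun hs' => huv.ne' ?_, Sym2.eq_swap⟩
      simp [reweight, hs, hs']
    · exact ⟨(u, v), hs, rfl⟩
  exact (Set.ncard_le_ncard hsub).trans Set.ncard_image_le

/-- The weighted incidence map: the squared norm of its value at `x` is twice the Laplacian form of
`w`, since both orientations of each edge occur. -/
noncomputable def weightedIncidence (w : V → V → ℝ) : (V → ℝ) →ₗ[ℝ] EuclideanSpace ℝ (V × V) where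
  toFun x := WithLp.toLp 2 fun p => √(w p.1 p.2) * (x p.1 - x p.2)
  map_add' x y := by ext p; simp; ring
  map_smul' c x := by ext p; simp; ring

theorem weightedIncidence_apply_sq (hw : ∀ u v, 0 ≤ w u v) (x : V → ℝ) (p : V × V) :
    weightedIncidence w x p ^ 2 = w p.1 p.2 * (x p.1 - x p.2) ^ 2 := by
  simp [weightedIncidence, mul_pow, Real.sq_sqrt (hw _ _)]

variable [Fintype V]

theorem sum_sum_symmetrize_mul (s : V → V → ℝ) (hw : ∀ u v, w u v = w v u) :
    ∑ u, ∑ v, (s u v + s v u) / 2 * w u v = ∑ u, ∑ v, s u v * w u v := by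
  have hswap : ∑ u, ∑ v, s v u * w u v = ∑ u, ∑ v, s u v * w u v := by
    rw [Finset.sum_comm]
    simp only [hw]
  simp only [add_div, add_mul, Finset.sum_add_distrib, div_mul_eq_mul_div, ← Finset.sum_div, hswap,
    add_halves]

theorem graphLaplacian_isHermitian [DecidableEq V] (hw : ∀ u v, w u v = w v u) :
    (graphLaplacian w).IsHermitian := by
  ext u v
  rcases eq_or_ne u v with rfl | huv
  · rfl
  · simp [graphLaplacian, huv, huv.symm, hw u v]

theorem graphLaplacian_eq_diagonal_sub [DecidableEq V] (hw₀ : ∀ u, w u u = 0) :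
    graphLaplacian w = diagonal (fun u => ∑ v, w u v) - of w := by
  ext u v
  rcases eq_or_ne u v with rfl | huv
  · simp [graphLaplacian, hw₀]
  · simp [graphLaplacian, huv]

theorem graphLaplacian_mulVec_apply [DecidableEq V] (hw₀ : ∀ u, w u u = 0) (x : V → ℝ) (u : V) :
    (graphLaplacian w *ᵥ x) u = ∑ v, (x u - x v) * w u v := by
  rw [graphLaplacian_eq_diagonal_sub hw₀, sub_mulVec, Pi.sub_apply, mulVec_diagonal, mulVec]
  simp only [dotProduct, of_apply, Finset.sum_mul, ← Finset.sum_sub_distrib]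
  exact Finset.sum_congr rfl fun v _ => by ring

theorem dotProduct_graphLaplacian_mulVec [DecidableEq V] (hw : ∀ u v, w u v = w v u)
    (hw₀ : ∀ u, w u u = 0) (x : V → ℝ) :
    x ⬝ᵥ graphLaplacian w *ᵥ x = (∑ u, ∑ v, w u v * (x u - x v) ^ 2) / 2 := by
  calc x ⬝ᵥ graphLaplacian w *ᵥ x = ∑ u, ∑ v, x u * (x u - x v) * w u v := by
        simp only [dotProduct, graphLaplacian_mulVec_apply hw₀, Finset.mul_sum, mul_assoc]
    _ = ∑ u, ∑ v, (x u * (x u - x v) + x v * (x v - x u)) / 2 * w u v :=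
        (sum_sum_symmetrize_mul _ hw).symm
    _ = (∑ u, ∑ v, w u v * (x u - x v) ^ 2) / 2 := by
        simp only [Finset.sum_div]
        congr! 2
        ring

theorem dotProduct_graphLaplacian_reweight_mulVec [DecidableEq V] (hw : ∀ u v, w u v = w v u)
    (hw₀ : ∀ u, w u u = 0) (s : V × V → ℝ) (x : V → ℝ) :
    x ⬝ᵥ graphLaplacian (reweight s w) *ᵥ x =
      (∑ u, ∑ v, s (u, v) * (w u v * (x u - x v) ^ 2)) / 2 := by
  rw [dotProduct_graphLaplacian_mulVec (reweight_comm hw s) (reweight_self hw₀ s)]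
  simp only [reweight, mul_assoc]
  rw [sum_sum_symmetrize_mul (fun u v => s (u, v))]
  intro u v
  rw [hw, ← neg_sub, neg_sq]

theorem exists_sparse_reweight {γ : ℝ} (hγ : 1 < γ) :
    ∃ C : ℕ, ∀ {V : Type*} [Fintype V] [DecidableEq V] {w : V → V → ℝ},
      (∀ u v, w u v = w v u) → (∀ u v, 0 ≤ w u v) → (∀ u, w u u = 0) →
      ∃ s : V × V → ℝ, 0 ≤ s ∧ (Function.support s).ncard ≤ C * Fintype.card V ∧ ∀ x : V → ℝ,
        x ⬝ᵥ graphLaplacian (reweight s w) *ᵥ x ≤ γ * (x ⬝ᵥ graphLaplacian w *ᵥ x) ∧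
          x ⬝ᵥ graphLaplacian w *ᵥ x ≤ γ * (x ⬝ᵥ graphLaplacian (reweight s w) *ᵥ x) := by
  obtain ⟨C, hC⟩ := exists_sparse_weights_of_submodule hγ
  refine ⟨C, fun {V} _ _ w hw hw_nonneg hw₀ => ?_⟩
  obtain ⟨s, hs, hcard, hform⟩ := hC (LinearMap.range (weightedIncidence w))
  have hrank : Module.finrank ℝ (LinearMap.range (weightedIncidence w)) ≤ Fintype.card V := by
    simpa only [Module.finrank_fintype_fun_eq_card] using
      LinearMap.finrank_range_le (weightedIncidence w)
  refine ⟨s, hs, hcard.trans (Nat.mul_le_mul_left C hrank), fun x => ?_⟩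
  have hx := hform _ (LinearMap.mem_range_self (weightedIncidence w) x)
  simp only [weightedIncidence_apply_sq hw_nonneg, Fintype.sum_prod_type] at hx
  rw [dotProduct_graphLaplacian_mulVec hw hw₀, dotProduct_graphLaplacian_reweight_mulVec hw hw₀]
  constructor <;> linarith

theorem posSemidef_sub_of_dotProduct_mulVec_le {A B : Matrix V V ℝ} (hA : A.IsHermitian)
    (hB : B.IsHermitian) (h : ∀ x, x ⬝ᵥ B *ᵥ x ≤ x ⬝ᵥ A *ᵥ x) : (A - B).PosSemidef :=
  .of_dotProduct_mulVec_nonneg (hA.sub hB) fun x => by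
    simpa only [star_trivial, sub_mulVec, dotProduct_sub, sub_nonneg] using h x

theorem product_demand_sparsifier_general {γ : ℝ} (hγ : 1 < γ) :
    ∃ C : ℝ, 0 < C ∧ ∀ {V : Type*} [Fintype V] [DecidableEq V] {w : V → V → ℝ},
      (∀ u v, w u v = w v u) → (∀ u v, 0 ≤ w u v) → (∀ u, w u u = 0) →
      ∃ w' : V → V → ℝ,
        (∀ u v, w' u v = w' v u) ∧ (∀ u v, 0 ≤ w' u v) ∧ (∀ u, w' u u = 0) ∧
        (Set.ncard {p : Sym2 V | ∃ u v, p = s(u, v) ∧ 0 < w' u v} : ℝ) ≤ C * Fintype.card V ∧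
        (graphLaplacian w - (1 / γ) • graphLaplacian w').PosSemidef ∧
        (γ • graphLaplacian w' - graphLaplacian w).PosSemidef := by
  obtain ⟨C, hC⟩ := exists_sparse_reweight hγ
  refine ⟨C + 1, by positivity, fun {V} _ _ w hw hw_nonneg hw₀ => ?_⟩
  obtain ⟨s, hs, hcard, hform⟩ := hC hw hw_nonneg hw₀
  have hL := graphLaplacian_isHermitian hw
  have hL' := graphLaplacian_isHermitian (reweight_comm hw s)
  refine ⟨reweight s w, reweight_comm hw s, fun u v => ?_, reweight_self hw₀ s, ?_, ?_, ?_⟩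
  · exact mul_nonneg (div_nonneg (add_nonneg (hs _) (hs _)) zero_le_two) (hw_nonneg u v)
  · exact_mod_cast (ncard_edges_reweight_le s w).trans
      (hcard.trans (Nat.mul_le_mul_right _ C.le_succ))
  · refine posSemidef_sub_of_dotProduct_mulVec_le hL (hL'.smul (.all _)) fun x => ?_
    rw [smul_mulVec, dotProduct_smul, smul_eq_mul, one_div, inv_mul_le_iff₀ (by positivity)]
    exact (hform x).1
  · refine posSemidef_sub_of_dotProduct_mulVec_le (hL'.smul (.all _)) hL fun x => ?_
    rw [smul_mulVec, dotProduct_smul, smul_eq_mul]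
    exact (hform x).2

end Graph

/-- Every product demand graph `H(d)` admits a `2`-approximate spectral
sparsifier with `O(n)` edges. -/
theorem product_demand_sparsifier :
    ∃ C : ℝ, 0 < C ∧ ∀ n : ℕ, 0 < n → ∀ d : Fin n → ℝ, (∀ i, 0 < d i) →
      ∃ w' : Fin n → Fin n → ℝ,
        (∀ u v, w' u v = w' v u) ∧ (∀ u v, 0 ≤ w' u v) ∧ (∀ u, w' u u = 0) ∧
        ((Set.ncard {p : Sym2 (Fin n) | ∃ u v, p = s(u, v) ∧ 0 < w' u v} : ℝ) ≤ C * n) ∧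
        (graphLaplacian (fun u v => if u = v then 0 else d u * d v)
            - (1 / 2 : ℝ) • graphLaplacian w').PosSemidef ∧
        ((2 : ℝ) • graphLaplacian w'
            - graphLaplacian (fun u v => if u = v then 0 else d u * d v)).PosSemidef := by
  obtain ⟨C, hC, hsparsify⟩ := product_demand_sparsifier_general one_lt_two
  refine ⟨C, hC, fun n _ d hd => ?_⟩
  simpa only [Fintype.card_fin] using hsparsify (w := fun u v => if u = v then 0 else d u * d v)
    (fun u v => by simp only [eq_comm, mul_comm])
    (fun u v => by split_ifs; exacts [le_rfl, (mul_pos (hd u) (hd v)).le]) (fun u => if_pos rfl)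
end

section
/- For every real number κ ≥ 1 and every real number ε with 0 < ε ≤ 1/2, there exists a real polynomial p of degree at most ⌈√κ · log(2/ε)⌉ such that |1 − λ·p(λ)| ≤ ε for all λ ∈ [1/κ, 1]. -/
/-!
A residual `1 - X * p` is the same thing as a polynomial `q` with `q 0 = 1`, so we want such a `q`
of small degree that is small on `[a, b]`. Take `q = S / S 0`, where `S = T_n ∘ L` and `L` is the
affine map carrying `[a, b]` onto `[-1, 1]` and `0` to a point to the right of `1`. Then `|S| ≤ 1`
on `[a, b]`. With `r = √(a / b)` one has `L 0 = (1 + r²) / (1 - r²) = cosh (2 artanh r)`, whence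
`S 0 = cosh (2 n artanh r) ≥ exp (2 n r) / 2`, because `artanh r ≥ r`. Hence `|q| ≤ ε` on `[a, b]`
as soon as `2 n r ≥ log (2 / ε)`.
-/

section

open Polynomial Real Set

lemma exists_one_sub_X_mul_eq {R : Type*} [Ring R] {q : R[X]} (hq : q.eval 0 = 1) :
    ∃ p : R[X], p.natDegree ≤ q.natDegree ∧ 1 - X * p = q := by
  refine ⟨-q.divX, by simpa only [natDegree_neg] using natDegree_divX_le, ?_⟩
  have hq' := q.X_mul_divX_add
  rw [coeff_zero_eq_eval_zero, hq, C_1] at hq'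
  rw [mul_neg, sub_neg_eq_add, add_comm, hq']

lemma exp_le_two_mul_cosh (x : ℝ) : exp x ≤ 2 * cosh x := by
  rw [cosh_eq]
  linarith [exp_pos (-x)]

lemma le_artanh {r : ℝ} (hr₀ : 0 ≤ r) (hr₁ : r < 1) : r ≤ artanh r := by
  rw [artanh_eq_half_log ⟨by linarith, hr₁.le⟩]
  simpa using sum_range_le_log_div hr₀ hr₁ 1

lemma cosh_two_mul_artanh {r : ℝ} (hr : r ∈ Ioo (-1) 1) :
    cosh (2 * artanh r) = (1 + r ^ 2) / (1 - r ^ 2) := by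
  have h : 0 ≤ 1 - r ^ 2 := by nlinarith [hr.1, hr.2]
  rw [cosh_two_mul, cosh_artanh hr, sinh_artanh hr, div_pow, div_pow, sq_sqrt h, one_pow, add_div]

lemma exp_le_two_mul_eval_T (n : ℕ) {r : ℝ} (hr₀ : 0 ≤ r) (hr₁ : r < 1) :
    exp (2 * n * r) ≤ 2 * (Chebyshev.T ℝ n).eval ((1 + r ^ 2) / (1 - r ^ 2)) := by
  rw [← cosh_two_mul_artanh ⟨by linarith, hr₁⟩, Chebyshev.T_real_cosh, Int.cast_natCast]
  calc exp (2 * n * r) ≤ exp (n * (2 * artanh r)) := by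
        rw [mul_comm 2 (n : ℝ), mul_assoc]
        gcongr
        exact le_artanh hr₀ hr₁
    _ ≤ 2 * cosh (n * (2 * artanh r)) := exp_le_two_mul_cosh _

/-- The `n`-th Chebyshev polynomial of the first kind, scaled and shifted from `[-1, 1]` to
`[a, b]`. The orientation is reversed (`a` goes to `1` and `b` to `-1`), so that the value at a
point to the left of `a` is positive for every `n`. -/
noncomputable def shiftedChebyshevT (a b : ℝ) (n : ℕ) : ℝ[X] :=
  (Chebyshev.T ℝ n).comp (C (-2 / (b - a)) * X + C ((b + a) / (b - a)))

namespace shiftedChebyshevT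

variable {a b : ℝ} (n : ℕ)

lemma natDegree_le : (shiftedChebyshevT a b n).natDegree ≤ n :=
  calc (shiftedChebyshevT a b n).natDegree
      ≤ (Chebyshev.T ℝ n).natDegree * (C (-2 / (b - a)) * X + C ((b + a) / (b - a))).natDegree :=
        natDegree_comp_le
    _ ≤ n * 1 := Nat.mul_le_mul (Chebyshev.natDegree_T ℝ n).le natDegree_linear_le
    _ = n := mul_one n

lemma eval_eq (x : ℝ) :
    (shiftedChebyshevT a b n).eval x =
      (Chebyshev.T ℝ n).eval ((b + a - 2 * x) / (b - a)) := by
  simp only [shiftedChebyshevT, eval_comp, eval_add, eval_mul, eval_C, eval_X]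
  congr 1
  ring

lemma abs_eval_le_one (hab : a < b) {x : ℝ} (hx : x ∈ Icc a b) :
    |(shiftedChebyshevT a b n).eval x| ≤ 1 := by
  rw [eval_eq]
  apply Chebyshev.abs_eval_T_real_le_one
  rw [abs_le, le_div_iff₀ (sub_pos.mpr hab), div_le_iff₀ (sub_pos.mpr hab)]
  constructor <;> linarith [hx.1, hx.2]

lemma exp_le_two_mul_eval_zero (ha : 0 ≤ a) (hab : a < b) :
    exp (2 * n * √(a / b)) ≤ 2 * (shiftedChebyshevT a b n).eval 0 := by
  have hb : 0 < b := ha.trans_lt hab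
  have hr : √(a / b) < 1 := by rwa [sqrt_lt' one_pos, one_pow, div_lt_one hb]
  have hL : (b + a - 2 * 0) / (b - a) = (1 + √(a / b) ^ 2) / (1 - √(a / b) ^ 2) := by
    rw [sq_sqrt (by positivity)]
    field_simp
    ring
  rw [eval_eq, hL]
  exact exp_le_two_mul_eval_T n (sqrt_nonneg _) hr

end shiftedChebyshevT

lemma exists_eval_zero_eq_one_and_abs_eval_le {a b : ℝ} (ha : 0 ≤ a) (hab : a < b) (n : ℕ) :
    ∃ q : ℝ[X], q.natDegree ≤ n ∧ q.eval 0 = 1 ∧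
      ∀ x ∈ Icc a b, |q.eval x| ≤ 2 / exp (2 * n * √(a / b)) := by
  set S := shiftedChebyshevT a b n
  have hS : exp (2 * n * √(a / b)) ≤ 2 * S.eval 0 :=
    shiftedChebyshevT.exp_le_two_mul_eval_zero n ha hab
  have hS₀ : 0 < S.eval 0 := by linarith [exp_pos (2 * n * √(a / b))]
  refine ⟨C (S.eval 0)⁻¹ * S, ?_, ?_, fun x hx => ?_⟩
  · exact (natDegree_C_mul_le _ _).trans (shiftedChebyshevT.natDegree_le n)
  · rw [eval_C_mul, inv_mul_cancel₀ hS₀.ne']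
  · calc |(C (S.eval 0)⁻¹ * S).eval x| = |S.eval x| / S.eval 0 := by
          rw [eval_C_mul, abs_mul, abs_of_pos (inv_pos.mpr hS₀), inv_mul_eq_div]
      _ ≤ 1 / S.eval 0 := by
          gcongr
          exact shiftedChebyshevT.abs_eval_le_one n hab hx
      _ ≤ 2 / exp (2 * n * √(a / b)) := by
          rw [div_le_div_iff₀ hS₀ (exp_pos _)]
          linarith

theorem chebyshev_inverse_approx_general {a b ε : ℝ} (ha : 0 < a) (hab : a ≤ b) (hε : 0 < ε)
    {n : ℕ} (hn : √(b / a) * log (2 / ε) ≤ 2 * n) :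
    ∃ p : ℝ[X], p.natDegree ≤ n ∧ ∀ x ∈ Icc a b, |1 - x * p.eval x| ≤ ε := by
  rcases hab.eq_or_lt with rfl | hab
  · refine ⟨C a⁻¹, by simp only [natDegree_C, zero_le], fun x hx => ?_⟩
    obtain rfl : x = a := by simpa using hx
    simpa [ha.ne'] using hε.le
  have hb : 0 < b := ha.trans hab
  obtain ⟨q, hq_deg, hq_zero, hq_le⟩ := exists_eval_zero_eq_one_and_abs_eval_le ha.le hab n
  obtain ⟨p, hp_deg, rfl⟩ := exists_one_sub_X_mul_eq hq_zero
  have h_log : log (2 / ε) ≤ 2 * n * √(a / b) := by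
    rwa [← inv_div b a, sqrt_inv, ← div_eq_mul_inv, le_div_iff₀' (by positivity)]
  have h_exp : 2 / exp (2 * n * √(a / b)) ≤ ε :=
    (div_le_comm₀ hε (exp_pos _)).mp ((log_le_iff_le_exp (by positivity)).mp h_log)
  refine ⟨p, hp_deg.trans hq_deg, fun x hx => ?_⟩
  simpa only [eval_sub, eval_one, eval_mul, eval_X] using (hq_le x hx).trans h_exp

end

/-- Polynomial approximation underlying preconditioned Chebyshev iteration:
for `κ ≥ 1` and `0 < ε ≤ 1/2` there is a real polynomial `p` of degree at most
`⌈√κ · log(2/ε)⌉` with `|1 − λ·p(λ)| ≤ ε` for all `λ ∈ [1/κ, 1]`. -/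
theorem chebyshev_inverse_approx (κ : ℝ) (hκ : 1 ≤ κ)
    (ε : ℝ) (hε0 : 0 < ε) (hε1 : ε ≤ 1 / 2) :
    ∃ p : Polynomial ℝ,
      p.natDegree ≤ ⌈Real.sqrt κ * Real.log (2 / ε)⌉₊ ∧
      ∀ x ∈ Set.Icc (1 / κ) 1, |1 - x * p.eval x| ≤ ε := by
  refine chebyshev_inverse_approx_general (by positivity) (div_le_self zero_le_one hκ) hε0 ?_
  rw [one_div_one_div]
  linarith [Nat.le_ceil (√κ * Real.log (2 / ε)), Nat.cast_nonneg (α := ℝ) ⌈√κ * Real.log (2 / ε)⌉₊]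
end
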